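/- arXiv:1607.00714 — 6 statements merged into one kernel-verified Lean document; each statement's English description precedes it below -/
import Mathlib

section
/- For every α ∈ [0,1] and every cache configuration c ∈ C_n(m), the flat product-form distribution π_F satisfies the global balance equation of the flat-architecture cache-replacement chain: π_F(c)·(1 − Σ_{j∈c_{h_N}} p_j − Σ_{j∈c_h} p_j) = (1−α)·Σ_{k in list 0} Σ_{u∈c_1} π_F(c_{k→(1,u)})·p_u/m_1 + α·Σ_{k in list 0} Σ_{u∈c_{h_N+1}} π_F(c_{k→(h_N+1,u)})·p_u/m_{h_N+1} + Σ_{i∈{1,…,h−1}\{h_N}} Σ_{u∈c_i} Σ_{v∈c_{i+1}} π_F(c_{(i,u)↔(i+1,v)})·p_v/m_{i+1}. -/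
/-!
If list `j` is one level higher than list `i`, exchanging `u ∈ c_i` with `v ∈ c_j` multiplies the
product-form weight by `p_u / p_v`. Hence `π(c_{(i,u)↔(j,v)}) p_v = π(c) p_u`, and averaging over
the `m_j` pages `v ∈ c_j` shows that the inflow into `c` from exchanges between `i` and `j` is
`π(c)` times the popularity of `c_i`. In the flat architecture the height increases by one along
`0 → 1`, `0 → h_N + 1` and `i → i + 1` for `i ∉ {0, h_N, h}`, and the shares `1 - α` and `α` of
list 0 add up to one. So the total inflow is `π(c)` times the popularity of all lists other than
`h_N` and `h`.
-/

open Finset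

/-- A cache configuration: lists are indexed by `Fin (h+1)`, index `0` being "list 0"
(the storage layer / pages in no cache list), indices `1,…,h` the cache lists.
Lists are pairwise disjoint, list `i ≠ 0` has `m i` pages, and all pages are covered. -/
def IsCacheConfig (n h : ℕ) (m : Fin (h+1) → ℕ) (c : Fin (h+1) → Finset (Fin n)) : Prop :=
  (∀ i, i ≠ 0 → (c i).card = m i) ∧
  (∀ i j, i ≠ j → Disjoint (c i) (c j)) ∧
  Finset.univ.biUnion c = Finset.univ

open scoped Classical in
/-- The finite set `C_n(m)` of all cache configurations. -/
noncomputable def cacheConfigs (n h : ℕ) (m : Fin (h+1) → ℕ) :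
    Finset (Fin (h+1) → Finset (Fin n)) :=
  Finset.univ.filter (IsCacheConfig n h m)

/-- Exchange a page of list `i` with a page of list `j`:
`swapPages c i j u v` moves `v` into list `i` (replacing `u`, which moves to list `j`,
replacing `v`).  For `i = 0` this is the replacement operation `c_{u→(j,v)}`
moving page `u` of list 0 into list `j` in place of `v`. -/
def swapPages (n h : ℕ) (c : Fin (h+1) → Finset (Fin n)) (i j : Fin (h+1)) (u v : Fin n) :
    Fin (h+1) → Finset (Fin n) :=
  fun l => if l = i then insert v ((c i).erase u)
           else if l = j then insert u ((c j).erase v) else c l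

/-- Unnormalized product-form weight `∏_i (∏_{j∈c_i} p_j)^{ht(i)}` (note `ht 0 = 0`). -/
noncomputable def configWeight (n h : ℕ) (p : Fin n → ℝ) (ht : Fin (h+1) → ℕ)
    (c : Fin (h+1) → Finset (Fin n)) : ℝ :=
  ∏ i, (∏ j ∈ c i, p j) ^ ht i

/-- The product-form distribution `π(c) = weight(c)/Z`. -/
noncomputable def piDist (n h : ℕ) (m : Fin (h+1) → ℕ) (p : Fin n → ℝ) (ht : Fin (h+1) → ℕ)
    (c : Fin (h+1) → Finset (Fin n)) : ℝ :=
  configWeight n h p ht c / ∑ c' ∈ cacheConfigs n h m, configWeight n h p ht c'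

/-- Flat height function: `ht_F(i) = i` for `i ≤ h_N`, `ht_F(i) = i − h_N` for `i > h_N`. -/
def htFlat (h hN : ℕ) : Fin (h+1) → ℕ :=
  fun i => if i.val ≤ hN then i.val else i.val - hN

section FinsetProd

variable {ι M : Type*} [DecidableEq ι] [CommMonoid M] {s t : Finset ι} {u v : ι}

theorem prod_insert_erase_mul (hu : u ∈ s) (hv : v ∉ s) (f : ι → M) :
    (∏ x ∈ insert v (s.erase u), f x) * f u = (∏ x ∈ s, f x) * f v := by
  rw [prod_insert (fun h ↦ hv (mem_of_mem_erase h)), mul_assoc, prod_erase_mul s f hu, mul_comm]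

theorem prod_insert_erase_mul_prod_insert_erase (hst : Disjoint s t) (hu : u ∈ s) (hv : v ∈ t)
    (f : ι → M) :
    (∏ x ∈ insert v (s.erase u), f x) * ∏ x ∈ insert u (t.erase v), f x =
      (∏ x ∈ s, f x) * ∏ x ∈ t, f x := by
  have hvs : v ∉ s.erase u := fun h ↦ disjoint_right.mp hst hv (mem_of_mem_erase h)
  rw [prod_insert hvs, mul_comm (f v), mul_assoc, mul_comm (f v),
    prod_insert_erase_mul hv (disjoint_left.mp hst hu), mul_comm _ (f u), ← mul_assoc,
    prod_erase_mul s f hu]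

end FinsetProd

theorem mem_cacheConfigs {n h : ℕ} {m : Fin (h + 1) → ℕ} {c : Fin (h + 1) → Finset (Fin n)} :
    c ∈ cacheConfigs n h m ↔ IsCacheConfig n h m c := by
  simp [cacheConfigs]

section Exchange

variable {n h : ℕ} {c : Fin (h + 1) → Finset (Fin n)} {i j l : Fin (h + 1)} {u v : Fin n}

theorem swapPages_apply_left : swapPages n h c i j u v i = insert v ((c i).erase u) :=
  if_pos rfl

theorem swapPages_apply_right (hij : i ≠ j) :
    swapPages n h c i j u v j = insert u ((c j).erase v) := by
  simp [swapPages, hij.symm]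

theorem swapPages_apply_of_ne (hi : l ≠ i) (hj : l ≠ j) : swapPages n h c i j u v l = c l := by
  simp [swapPages, hi, hj]

theorem configWeight_eq_mul_mul_prod_compl (hij : i ≠ j) (p : Fin n → ℝ) (ht : Fin (h + 1) → ℕ) :
    configWeight n h p ht c =
      (∏ x ∈ c i, p x) ^ ht i * (∏ x ∈ c j, p x) ^ ht j *
        ∏ l ∈ ({i, j} : Finset (Fin (h + 1)))ᶜ, (∏ x ∈ c l, p x) ^ ht l := by
  rw [configWeight, ← prod_mul_prod_compl {i, j}, prod_pair hij]

theorem configWeight_swapPages_mul {ht : Fin (h + 1) → ℕ} (hht : ht j = ht i + 1)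
    (hd : Disjoint (c i) (c j)) (hu : u ∈ c i) (hv : v ∈ c j) (p : Fin n → ℝ) :
    configWeight n h p ht (swapPages n h c i j u v) * p v = configWeight n h p ht c * p u := by
  have hij : i ≠ j := by
    rintro rfl
    omega
  have hrest : ∏ l ∈ ({i, j} : Finset (Fin (h + 1)))ᶜ,
        (∏ x ∈ swapPages n h c i j u v l, p x) ^ ht l =
      ∏ l ∈ ({i, j} : Finset (Fin (h + 1)))ᶜ, (∏ x ∈ c l, p x) ^ ht l := by
    refine prod_congr rfl fun l hl ↦ ?_
    obtain ⟨hli, hlj⟩ : l ≠ i ∧ l ≠ j := by simpa using hl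
    rw [swapPages_apply_of_ne hli hlj]
  have hpair := prod_insert_erase_mul_prod_insert_erase hd hu hv p
  have hupper := prod_insert_erase_mul hv (disjoint_left.mp hd hu) p
  rw [configWeight_eq_mul_mul_prod_compl hij, configWeight_eq_mul_mul_prod_compl hij, hrest,
    swapPages_apply_left, swapPages_apply_right hij, hht]
  set R := ∏ l ∈ ({i, j} : Finset (Fin (h + 1)))ᶜ, (∏ x ∈ c l, p x) ^ ht l
  set A := ∏ x ∈ c i, p x
  set B := ∏ x ∈ c j, p x
  set A' := ∏ x ∈ insert v ((c i).erase u), p x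
  set B' := ∏ x ∈ insert u ((c j).erase v), p x
  calc A' ^ ht i * B' ^ (ht i + 1) * R * p v = (A' * B') ^ ht i * (B' * p v) * R := by ring
    _ = (A * B) ^ ht i * (B * p u) * R := by rw [hpair, hupper]
    _ = A ^ ht i * B ^ (ht i + 1) * R * p u := by ring

end Exchange

namespace IsCacheConfig

variable {n h : ℕ} {m : Fin (h + 1) → ℕ} {c : Fin (h + 1) → Finset (Fin n)}

theorem card_eq (hc : IsCacheConfig n h m c) {i : Fin (h + 1)} (hi : i ≠ 0) : #(c i) = m i :=
  hc.1 i hi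

theorem disjoint (hc : IsCacheConfig n h m c) {i j : Fin (h + 1)} (hij : i ≠ j) :
    Disjoint (c i) (c j) :=
  hc.2.1 i j hij

theorem sum_sum_eq_sum {M : Type*} [AddCommMonoid M] (hc : IsCacheConfig n h m c) (f : Fin n → M) :
    ∑ i, ∑ k ∈ c i, f k = ∑ k, f k := by
  rw [← hc.2.2, sum_biUnion fun _ _ _ _ hij ↦ hc.disjoint hij]

theorem sum_sum_swapPages (hc : IsCacheConfig n h m c) {p : Fin n → ℝ} {ht : Fin (h + 1) → ℕ}
    {μ : (Fin (h + 1) → Finset (Fin n)) → ℝ} {κ : ℝ} (hμ : ∀ c, μ c = κ * configWeight n h p ht c)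
    {i j : Fin (h + 1)} (hht : ht j = ht i + 1) (hj : j ≠ 0) (hmj : 0 < m j) :
    ∑ u ∈ c i, ∑ v ∈ c j, μ (swapPages n h c i j u v) * p v / (m j : ℝ) =
      μ c * ∑ u ∈ c i, p u := by
  have hij : i ≠ j := by
    rintro rfl
    omega
  have hexchange : ∀ u ∈ c i, ∀ v ∈ c j, μ (swapPages n h c i j u v) * p v = μ c * p u := by
    intro u hu v hv
    rw [hμ, hμ, mul_assoc, configWeight_swapPages_mul hht (hc.disjoint hij) hu hv, mul_assoc]
  have hm : (m j : ℝ) ≠ 0 := Nat.cast_ne_zero.mpr hmj.ne'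
  calc ∑ u ∈ c i, ∑ v ∈ c j, μ (swapPages n h c i j u v) * p v / (m j : ℝ)
      = ∑ u ∈ c i, ∑ _v ∈ c j, μ c * p u / (m j : ℝ) :=
        sum_congr rfl fun u hu ↦ sum_congr rfl fun v hv ↦ by rw [hexchange u hu v hv]
    _ = ∑ u ∈ c i, μ c * p u := by
        simp only [sum_const, hc.card_eq hj, nsmul_eq_mul, mul_div_cancel₀ _ hm]
    _ = μ c * ∑ u ∈ c i, p u := (mul_sum _ _ _).symm

end IsCacheConfig

section Flat

variable {h hN : ℕ}

theorem htFlat_eq_add_one {i j : Fin (h + 1)} (hij : j.val = i.val + 1) (hi : i.val ≠ hN) :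
    htFlat h hN j = htFlat h hN i + 1 := by
  unfold htFlat
  split_ifs <;> omega

theorem htFlat_succ_hN (hNh : hN < h) :
    htFlat h hN ⟨hN + 1, by omega⟩ = htFlat h hN 0 + 1 := by
  simp [htFlat]

theorem sum_fin_eq_boundary_add_sum_interior {M : Type*} [AddCommMonoid M] (hN1 : 1 ≤ hN)
    (hNh : hN < h) (f : Fin (h + 1) → M) :
    ∑ i, f i = f 0 + (f ⟨hN, by omega⟩ + f ⟨h, by omega⟩) +
      ∑ i ∈ univ.filter (fun i : Fin (h + 1) ↦ 1 ≤ i.val ∧ i.val < h ∧ i.val ≠ hN), f i := by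
  have hboundary : univ.filter (fun i : Fin (h + 1) ↦ ¬(1 ≤ i.val ∧ i.val < h ∧ i.val ≠ hN)) =
      {0, ⟨hN, by omega⟩, ⟨h, by omega⟩} := by
    ext i
    simp only [mem_filter, mem_univ, true_and, mem_insert, mem_singleton, Fin.ext_iff, Fin.val_zero]
    omega
  have h0 : (0 : Fin (h + 1)) ∉ ({⟨hN, by omega⟩, ⟨h, by omega⟩} : Finset (Fin (h + 1))) := by
    simp only [mem_insert, mem_singleton, Fin.ext_iff, Fin.val_zero]
    omega
  have hNh' : (⟨hN, by omega⟩ : Fin (h + 1)) ≠ ⟨h, by omega⟩ := Fin.ne_of_val_ne hNh.ne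
  rw [← sum_filter_not_add_sum_filter univ
    (fun i : Fin (h + 1) ↦ 1 ≤ i.val ∧ i.val < h ∧ i.val ≠ hN), hboundary, sum_insert h0,
    sum_pair hNh']

end Flat

theorem flat_global_balance_general {n h hN : ℕ} (hN1 : 1 ≤ hN) (hNh : hN < h) {p : Fin n → ℝ}
    {m : Fin (h + 1) → ℕ} (hm : ∀ i, i ≠ 0 → 0 < m i)
    {μ : (Fin (h + 1) → Finset (Fin n)) → ℝ} {κ : ℝ}
    (hμ : ∀ c, μ c = κ * configWeight n h p (htFlat h hN) c) (α : ℝ)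
    {c : Fin (h + 1) → Finset (Fin n)} (hc : IsCacheConfig n h m c) :
    μ c * ((∑ k, p k) - (∑ j ∈ c ⟨hN, by omega⟩, p j) - ∑ j ∈ c ⟨h, by omega⟩, p j) =
      (1 - α) * (∑ k ∈ c 0, ∑ u ∈ c ⟨1, by omega⟩,
          μ (swapPages n h c 0 ⟨1, by omega⟩ k u) * p u / (m ⟨1, by omega⟩ : ℝ))
      + α * (∑ k ∈ c 0, ∑ u ∈ c ⟨hN + 1, by omega⟩,
          μ (swapPages n h c 0 ⟨hN + 1, by omega⟩ k u) * p u / (m ⟨hN + 1, by omega⟩ : ℝ))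
      + ∑ i ∈ univ.filter (fun i : Fin (h + 1) ↦ 1 ≤ i.val ∧ i.val < h ∧ i.val ≠ hN),
          ∑ u ∈ c i, ∑ v ∈ c (i + 1),
            μ (swapPages n h c i (i + 1) u v) * p v / (m (i + 1) : ℝ) := by
  have inflow {i j : Fin (h + 1)} (hj : j.val ≠ 0) (hht : htFlat h hN j = htFlat h hN i + 1) :=
    hc.sum_sum_swapPages hμ hht (Fin.ne_of_val_ne hj) (hm j (Fin.ne_of_val_ne hj))
  have inflow_interior : ∀ i ∈ univ.filter
      (fun i : Fin (h + 1) ↦ 1 ≤ i.val ∧ i.val < h ∧ i.val ≠ hN),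
      ∑ u ∈ c i, ∑ v ∈ c (i + 1), μ (swapPages n h c i (i + 1) u v) * p v / (m (i + 1) : ℝ) =
        μ c * ∑ u ∈ c i, p u := by
    intro i hi
    obtain ⟨-, hih, hiN⟩ : 1 ≤ i.val ∧ i.val < h ∧ i.val ≠ hN := by simpa using hi
    have hsucc : (i + 1).val = i.val + 1 := Fin.val_add_one_of_lt (Fin.lt_def.mpr hih)
    exact inflow (by omega) (htFlat_eq_add_one hsucc hiN)
  rw [inflow one_ne_zero (htFlat_eq_add_one (i := 0) rfl (Nat.ne_of_lt hN1)),
    inflow hN.succ_ne_zero (htFlat_succ_hN hNh), sum_congr rfl inflow_interior, ← mul_sum,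
    ← hc.sum_sum_eq_sum p, sum_fin_eq_boundary_add_sum_interior hN1 hNh]
  ring

/-- the flat product-form distribution satisfies the global balance equation
of the flat-architecture cache-replacement chain. -/
theorem flat_global_balance
    (n h hN : ℕ) (hn : 2 ≤ n) (hh : 2 ≤ h) (hN1 : 1 ≤ hN) (hNh : hN < h)
    (p : Fin n → ℝ) (hp : ∀ k, 0 < p k) (hpsum : ∑ k, p k = 1)
    (m : Fin (h+1) → ℕ) (hm : ∀ i, i ≠ 0 → 0 < m i)
    (hmn : ∑ i ∈ Finset.univ.filter (fun i : Fin (h+1) => i ≠ 0), m i < n)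
    (α : ℝ) (hα0 : 0 ≤ α) (hα1 : α ≤ 1)
    (c : Fin (h+1) → Finset (Fin n)) (hc : c ∈ cacheConfigs n h m) :
    piDist n h m p (htFlat h hN) c *
        (1 - (∑ j ∈ c ⟨hN, by omega⟩, p j) - ∑ j ∈ c ⟨h, by omega⟩, p j) =
      (1 - α) * (∑ k ∈ c 0, ∑ u ∈ c ⟨1, by omega⟩,
          piDist n h m p (htFlat h hN) (swapPages n h c 0 ⟨1, by omega⟩ k u) * p u
            / (m ⟨1, by omega⟩ : ℝ))
      + α * (∑ k ∈ c 0, ∑ u ∈ c ⟨hN + 1, by omega⟩,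
          piDist n h m p (htFlat h hN) (swapPages n h c 0 ⟨hN + 1, by omega⟩ k u) * p u
            / (m ⟨hN + 1, by omega⟩ : ℝ))
      + ∑ i ∈ Finset.univ.filter (fun i : Fin (h+1) => 1 ≤ i.val ∧ i.val < h ∧ i.val ≠ hN),
          ∑ u ∈ c i, ∑ v ∈ c (i + 1),
            piDist n h m p (htFlat h hN) (swapPages n h c i (i + 1) u v) * p v
              / (m (i + 1) : ℝ) := by
  simpa only [hpsum] using flat_global_balance_general hN1 hNh hm
    (μ := piDist n h m p (htFlat h hN)) (fun _ ↦ div_eq_inv_mul _ _) α (mem_cacheConfigs.mp hc)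
end

section
/- Let π: C_n(m) → (0,∞) be a probability distribution (Σ_{c∈C_n(m)} π(c) = 1). Then π satisfies the flat exchange conditions (*F) if and only if π(c) = Z_F^{-1} ∏_{i=1}^h (∏_{j∈c_i} p_j)^{ht_F(i)} for every c ∈ C_n(m), where Z_F = Σ_{c'∈C_n(m)} ∏_{i=1}^h (∏_{j∈c'_i} p_j)^{ht_F(i)}. -/
open Finset

/-!
Read a configuration as a labelling `f` of the pages by their lists. Its weight is
`∏ k, p k ^ ht (f k)`, and exchanging two pages precomposes `f` with a transposition. When the two
lists differ in height by one, the exchange condition says precisely that `r = π / weight` takes the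
same value before and after the exchange, so the product form satisfies the conditions.

Conversely, write the reachable labellings as `f ∘ σ` for a fixed `f` and think of the pages as
fillers of slots, the slots being labelled by `f`: exchanging the contents of the slots `a` and `b`
turns `f ∘ σ` into `f ∘ swap a b ∘ σ`. The permutations whose left multiplication preserves
`σ ↦ r (f ∘ σ)` form a monoid containing `swap a b` as soon as the lists of `a` and `b` are equal or
adjacent. No list is empty and the adjacency of the lists is connected, so this monoid contains all
transpositions, hence all permutations. Any two configurations differ by a permutation, so `r` is
constant and normalization determines the constant.
-/

section Labelling

variable {α ι : Type*}

lemma comp_swap_eq_self [DecidableEq α] {f : α → ι} {a b : α} (hab : f a = f b) :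
    f ∘ Equiv.swap a b = f := by
  simp [Equiv.comp_swap_eq_update, hab]

lemma submonoid_eq_top_of_swap_mem [DecidableEq α] [Finite α] {E : ι → ι → Prop}
    (hE : ∀ i j, Relation.EqvGen E i j) {f : α → ι} (hf : f.Surjective)
    {M : Submonoid (Equiv.Perm α)} (hM_eq : ∀ a b, f a = f b → Equiv.swap a b ∈ M)
    (hM_rel : ∀ a b, E (f a) (f b) → Equiv.swap a b ∈ M) : M = ⊤ := by
  have swap_mem {i j : ι} (hij : Relation.EqvGen E i j) :
      ∀ a b, f a = i → f b = j → Equiv.swap a b ∈ M := by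
    induction hij with
    | rel i j hij => rintro a b rfl rfl; exact hM_rel a b hij
    | refl i => rintro a b rfl hb; exact hM_eq a b hb.symm
    | symm i j _ ih => intro a b ha hb; exact Equiv.swap_comm b a ▸ ih b a hb ha
    | trans i j k _ _ ihij ihjk =>
      intro a b ha hb
      obtain ⟨c, hc⟩ := hf j
      exact SubmonoidClass.swap_mem_trans M (ihij a c ha hc) (ihjk c b hc hb)
  rw [← top_le_iff, ← Equiv.Perm.mclosure_isSwap, Submonoid.closure_le]
  rintro _ ⟨a, b, -, rfl⟩
  exact swap_mem (hE _ _) a b rfl rfl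

lemma comp_perm_eq_of_comp_swap_eq [DecidableEq α] [Finite α] {X : Type*} {E : ι → ι → Prop}
    (hE : ∀ i j, Relation.EqvGen E i j) {f : α → ι} (hf : f.Surjective) {r : (α → ι) → X}
    (hr : ∀ (σ : Equiv.Perm α) (u v : α), E (f (σ u)) (f (σ v)) →
      r ((f ∘ σ) ∘ Equiv.swap u v) = r (f ∘ σ))
    (σ : Equiv.Perm α) : r (f ∘ σ) = r f := by
  let M : Submonoid (Equiv.Perm α) :=
    { carrier := {τ | ∀ σ : Equiv.Perm α, r (f ∘ (τ * σ : Equiv.Perm α)) = r (f ∘ σ)}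
      one_mem' := fun σ => by rw [one_mul]
      mul_mem' := fun {τ₁ τ₂} h₁ h₂ σ => by rw [mul_assoc, h₁, h₂] }
  have hM : M = ⊤ := by
    refine submonoid_eq_top_of_swap_mem hE hf (fun a b hab τ => ?_) (fun a b hab τ => ?_)
    · rw [Equiv.Perm.coe_mul, ← Function.comp_assoc, comp_swap_eq_self hab]
    · rw [Equiv.swap_mul_eq_mul_swap, Equiv.Perm.coe_mul, ← Function.comp_assoc]
      exact hr τ _ _ (by simpa using hab)
  have hσ : σ ∈ M := hM ▸ Submonoid.mem_top σ
  simpa using hσ 1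

section Fibers

variable [Fintype α] [DecidableEq ι]

/-- The configuration described by a labelling `f` of the pages by lists: its list `i` is the fiber
of `f` over `i`. Exchanges of pages become precompositions of `f` with transpositions. -/
def labelConfig (f : α → ι) : ι → Finset α :=
  fun i => {k | f k = i}

@[simp]
lemma mem_labelConfig {f : α → ι} {i : ι} {k : α} : k ∈ labelConfig f i ↔ f k = i := by
  simp [labelConfig]

lemma exists_perm_comp_eq_iff_card_labelConfig_eq {f g : α → ι} :
    (∃ σ : Equiv.Perm α, f ∘ σ = g) ↔ ∀ i, #(labelConfig f i) = #(labelConfig g i) := by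
  constructor
  · rintro ⟨σ, rfl⟩ i
    exact (card_equiv σ fun k => by simp).symm
  · intro hcard
    let e (i : ι) : {k // g k = i} ≃ {k // f k = i} := Fintype.equivOfCardEq <| by
      rw [Fintype.card_subtype, Fintype.card_subtype]
      exact (hcard i).symm
    exact ⟨Equiv.ofFiberEquiv e, funext (Equiv.ofFiberEquiv_map e)⟩

lemma sum_card_labelConfig [Fintype ι] (f : α → ι) :
    ∑ i, #(labelConfig f i) = Fintype.card α :=
  (card_eq_sum_card_fiberwise fun _ _ => mem_coe.2 (mem_univ _)).symm

end Fibers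

end Labelling

section LabelWeight

variable {α ι M : Type*} [Fintype α]

/-- The product-form weight of the configuration described by the labelling `f`, written as a
product over the pages: a page `k` contributes `p k` to the power of the height of its list. -/
def labelWeight [CommMonoid M] (p : α → M) (ht : ι → ℕ) (f : α → ι) : M :=
  ∏ k, p k ^ ht (f k)

lemma labelWeight_comp_swap_mul [DecidableEq α] [CommMonoid M] (p : α → M) {ht : ι → ℕ}
    {f : α → ι} {u v : α} (hht : ht (f v) = ht (f u) + 1) :
    labelWeight p ht (f ∘ Equiv.swap u v) * p v = labelWeight p ht f * p u := by
  have huv : u ≠ v := by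
    rintro rfl
    lia
  have prod_compl_eq : ∏ k ∈ {u, v}ᶜ, p k ^ ht ((f ∘ Equiv.swap u v) k)
      = ∏ k ∈ {u, v}ᶜ, p k ^ ht (f k) := by
    refine prod_congr rfl fun k hk => ?_
    simp only [mem_compl, mem_insert, mem_singleton, not_or] at hk
    rw [Function.comp_apply, Equiv.swap_apply_of_ne_of_ne hk.1 hk.2]
  simp only [labelWeight]
  rw [← prod_mul_prod_compl {u, v}, prod_compl_eq, ← prod_mul_prod_compl {u, v}, prod_pair huv,
    prod_pair huv]
  simp only [Function.comp_apply, Equiv.swap_apply_left, Equiv.swap_apply_right, hht, pow_succ]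
  ac_rfl

variable {K : Type*} [Field K] {p : α → K}

lemma labelWeight_ne_zero (hp : ∀ k, p k ≠ 0) (ht : ι → ℕ) (f : α → ι) :
    labelWeight p ht f ≠ 0 :=
  prod_ne_zero_iff.2 fun k _ => pow_ne_zero _ (hp k)

lemma div_labelWeight_comp_swap_eq_iff [DecidableEq α] (hp : ∀ k, p k ≠ 0) {ht : ι → ℕ}
    {f : α → ι} {u v : α} (hht : ht (f v) = ht (f u) + 1) (x y : K) :
    x / labelWeight p ht (f ∘ Equiv.swap u v) = y / labelWeight p ht f ↔ x * p v = y * p u := by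
  have hW : labelWeight p ht f ≠ 0 := labelWeight_ne_zero hp ht f
  have hswap := labelWeight_comp_swap_mul p hht
  calc x / labelWeight p ht (f ∘ Equiv.swap u v) = y / labelWeight p ht f
      ↔ x * labelWeight p ht f = y * labelWeight p ht (f ∘ Equiv.swap u v) :=
        div_eq_div_iff (labelWeight_ne_zero hp ht _) hW
    _ ↔ x * labelWeight p ht f * p v = y * labelWeight p ht (f ∘ Equiv.swap u v) * p v :=
        (mul_left_inj' (hp v)).symm
    _ ↔ x * p v * labelWeight p ht f = y * p u * labelWeight p ht f := by
        rw [mul_assoc y, hswap, mul_right_comm x, mul_assoc y, mul_comm (p u)]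
    _ ↔ x * p v = y * p u := mul_left_inj' hW

end LabelWeight

lemma forall_div_eq_div_iff_eq_div_sum {X K : Type*} [Field K] {s : Finset X} {x w : X → K}
    (hw : ∀ a ∈ s, w a ≠ 0) (hx : ∑ a ∈ s, x a = 1) :
    (∀ a ∈ s, ∀ b ∈ s, x b / w b = x a / w a) ↔ ∀ a ∈ s, x a = w a / ∑ b ∈ s, w b := by
  constructor
  · intro hconst a ha
    have hprop : ∑ b ∈ s, x b = x a / w a * ∑ b ∈ s, w b := by
      rw [mul_sum]
      exact sum_congr rfl fun b hb => (div_eq_iff (hw b hb)).1 (hconst a ha b hb)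
    have hsum : x a / w a * ∑ b ∈ s, w b = 1 := hprop ▸ hx
    rw [← mul_one_div, ← eq_one_div_of_mul_eq_one_left hsum, mul_div_cancel₀ _ (hw a ha)]
  · intro hform a ha b hb
    rw [hform a ha, hform b hb, div_div_cancel_left' (hw a ha), div_div_cancel_left' (hw b hb)]

section CacheConfig

variable {n h : ℕ} {m : Fin (h + 1) → ℕ}

lemma labelConfig_mem_cacheConfigs {f : Fin n → Fin (h + 1)} :
    labelConfig f ∈ cacheConfigs n h m ↔ ∀ i, i ≠ 0 → #(labelConfig f i) = m i := by
  simp only [cacheConfigs, IsCacheConfig, mem_filter_univ]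
  refine ⟨And.left, fun hcard => ⟨hcard, fun i j hij => ?_, ?_⟩⟩
  · exact disjoint_left.2 fun k hi hj => hij (mem_labelConfig.1 hi ▸ mem_labelConfig.1 hj)
  · ext k
    simp

lemma exists_eq_labelConfig {c : Fin (h + 1) → Finset (Fin n)} (hc : c ∈ cacheConfigs n h m) :
    ∃ f, c = labelConfig f := by
  simp only [cacheConfigs, IsCacheConfig, mem_filter_univ] at hc
  obtain ⟨-, hdisj, hcover⟩ := hc
  have exists_list (k : Fin n) : ∃ i, k ∈ c i := by
    simpa using hcover.ge (mem_univ k)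
  choose f hf using exists_list
  refine ⟨f, funext fun i => Finset.ext fun k => ?_⟩
  rw [mem_labelConfig]
  constructor
  · intro hk
    by_contra hne
    exact disjoint_left.1 (hdisj _ _ hne) (hf k) hk
  · rintro rfl
    exact hf k

/-- `cacheConfigs` ignores `m 0`: the size of list `0` is what the other lists leave over. -/
lemma card_labelConfig {f : Fin n → Fin (h + 1)} (hf : labelConfig f ∈ cacheConfigs n h m)
    (i : Fin (h + 1)) :
    #(labelConfig f i) = Function.update m 0 (n - ∑ i with i ≠ 0, m i) i := by
  rw [labelConfig_mem_cacheConfigs] at hf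
  obtain rfl | hi := eq_or_ne i 0
  · have hsum := sum_card_labelConfig f
    rw [← add_sum_erase _ _ (mem_univ 0), ← filter_ne',
      sum_congr rfl fun i hi => hf i (mem_filter.1 hi).2, Fintype.card_fin] at hsum
    rw [Function.update_self]
    lia
  · rw [Function.update_of_ne hi, hf i hi]

lemma labelConfig_mem_cacheConfigs_iff_exists_perm {f g : Fin n → Fin (h + 1)}
    (hf : labelConfig f ∈ cacheConfigs n h m) :
    labelConfig g ∈ cacheConfigs n h m ↔ ∃ σ : Equiv.Perm (Fin n), f ∘ σ = g := by
  rw [exists_perm_comp_eq_iff_card_labelConfig_eq]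
  constructor
  · intro hg i
    rw [card_labelConfig hf, card_labelConfig hg]
  · intro hcard
    rw [labelConfig_mem_cacheConfigs] at hf ⊢
    exact fun i hi => hcard i ▸ hf i hi

lemma surjective_of_labelConfig_mem_cacheConfigs (hm : ∀ i, i ≠ 0 → 0 < m i)
    (hmn : ∑ i with i ≠ 0, m i < n) {f : Fin n → Fin (h + 1)}
    (hf : labelConfig f ∈ cacheConfigs n h m) : f.Surjective := by
  intro i
  have card_pos : 0 < #(labelConfig f i) := by
    rw [card_labelConfig hf]
    obtain rfl | hi := eq_or_ne i 0
    · simpa using hmn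
    · simpa [hi] using hm i hi
  obtain ⟨k, hk⟩ := Finset.card_pos.1 card_pos
  exact ⟨k, mem_labelConfig.1 hk⟩

lemma swapPages_labelConfig {f : Fin n → Fin (h + 1)} {u v : Fin n} (huv : f u ≠ f v) :
    swapPages n h (labelConfig f) (f u) (f v) u v = labelConfig (f ∘ Equiv.swap u v) := by
  ext l k
  simp only [swapPages, mem_labelConfig, Function.comp_apply, Equiv.swap_apply_def]
  grind [mem_labelConfig]

lemma configWeight_labelConfig (p : Fin n → ℝ) (ht : Fin (h + 1) → ℕ) (f : Fin n → Fin (h + 1)) :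
    configWeight n h p ht (labelConfig f) = labelWeight p ht f := by
  simp only [configWeight, labelWeight, ← prod_pow]
  rw [← prod_fiberwise univ f]
  refine prod_congr rfl fun i _ => prod_congr rfl fun k hk => ?_
  rw [mem_labelConfig.1 hk]

variable {E : Fin (h + 1) → Fin (h + 1) → Prop} {ht : Fin (h + 1) → ℕ} {p : Fin n → ℝ}
  {π : (Fin (h + 1) → Finset (Fin n)) → ℝ}

lemma exchange_labelConfig_iff (hht : ∀ i j, E i j → ht j = ht i + 1) (hp : ∀ k, p k ≠ 0)
    (f : Fin n → Fin (h + 1)) :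
    (∀ i j, E i j → ∀ u ∈ labelConfig f i, ∀ v ∈ labelConfig f j,
      π (swapPages n h (labelConfig f) i j u v) * p v = π (labelConfig f) * p u)
    ↔ ∀ u v, E (f u) (f v) →
      π (labelConfig (f ∘ Equiv.swap u v)) / labelWeight p ht (f ∘ Equiv.swap u v)
        = π (labelConfig f) / labelWeight p ht f := by
  have swap_iff {u v : Fin n} (huv : E (f u) (f v)) :
      π (swapPages n h (labelConfig f) (f u) (f v) u v) * p v = π (labelConfig f) * p u
      ↔ π (labelConfig (f ∘ Equiv.swap u v)) / labelWeight p ht (f ∘ Equiv.swap u v)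
        = π (labelConfig f) / labelWeight p ht f := by
    have hne : f u ≠ f v := fun heq => by simpa [heq] using hht _ _ huv
    rw [swapPages_labelConfig hne, div_labelWeight_comp_swap_eq_iff hp (hht _ _ huv)]
  constructor
  · exact fun H u v huv => (swap_iff huv).1
      (H _ _ huv u (mem_labelConfig.2 rfl) v (mem_labelConfig.2 rfl))
  · intro H i j hij u hu v hv
    obtain rfl := mem_labelConfig.1 hu
    obtain rfl := mem_labelConfig.1 hv
    exact (swap_iff hij).2 (H u v hij)

lemma exchange_iff_div_configWeight_eq (hE : ∀ i j, Relation.EqvGen E i j)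
    (hht : ∀ i j, E i j → ht j = ht i + 1) (hp : ∀ k, p k ≠ 0)
    (hm : ∀ i, i ≠ 0 → 0 < m i) (hmn : ∑ i with i ≠ 0, m i < n) :
    (∀ c ∈ cacheConfigs n h m, ∀ i j, E i j → ∀ u ∈ c i, ∀ v ∈ c j,
      π (swapPages n h c i j u v) * p v = π c * p u)
    ↔ ∀ c ∈ cacheConfigs n h m, ∀ d ∈ cacheConfigs n h m,
      π d / configWeight n h p ht d = π c / configWeight n h p ht c := by
  constructor
  · intro H c hc d hd
    obtain ⟨f, rfl⟩ := exists_eq_labelConfig hc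
    obtain ⟨g, rfl⟩ := exists_eq_labelConfig hd
    obtain ⟨σ, rfl⟩ := (labelConfig_mem_cacheConfigs_iff_exists_perm hc).1 hd
    rw [configWeight_labelConfig, configWeight_labelConfig]
    refine comp_perm_eq_of_comp_swap_eq (r := fun f => π (labelConfig f) / labelWeight p ht f)
      hE (surjective_of_labelConfig_mem_cacheConfigs hm hmn hc) (fun τ => ?_) σ
    exact (exchange_labelConfig_iff hht hp _).1
      (H _ ((labelConfig_mem_cacheConfigs_iff_exists_perm hc).2 ⟨τ, rfl⟩))
  · intro H c hc
    obtain ⟨f, rfl⟩ := exists_eq_labelConfig hc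
    refine (exchange_labelConfig_iff hht hp f).2 fun u v _ => ?_
    rw [← configWeight_labelConfig, ← configWeight_labelConfig]
    exact H _ hc _ ((labelConfig_mem_cacheConfigs_iff_exists_perm hc).2 ⟨Equiv.swap u v, rfl⟩)

lemma configWeight_ne_zero (hp : ∀ k, p k ≠ 0) (c : Fin (h + 1) → Finset (Fin n)) :
    configWeight n h p ht c ≠ 0 :=
  prod_ne_zero_iff.2 fun _ _ => pow_ne_zero _ (prod_ne_zero_iff.2 fun k _ => hp k)

theorem flat_exchange_iff_product_form_general (hE : ∀ i j, Relation.EqvGen E i j)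
    (hht : ∀ i j, E i j → ht j = ht i + 1) (hp : ∀ k, p k ≠ 0)
    (hm : ∀ i, i ≠ 0 → 0 < m i) (hmn : ∑ i with i ≠ 0, m i < n)
    (hπsum : ∑ c ∈ cacheConfigs n h m, π c = 1) :
    (∀ c ∈ cacheConfigs n h m, ∀ i j, E i j → ∀ u ∈ c i, ∀ v ∈ c j,
      π (swapPages n h c i j u v) * p v = π c * p u)
    ↔ ∀ c ∈ cacheConfigs n h m,
      π c = configWeight n h p ht c / ∑ c' ∈ cacheConfigs n h m, configWeight n h p ht c' :=
  (exchange_iff_div_configWeight_eq hE hht hp hm hmn).trans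
    (forall_div_eq_div_iff_eq_div_sum (fun c _ => configWeight_ne_zero hp c) hπsum)

end CacheConfig

section FlatAdj

variable {h hN : ℕ}

/-- The pairs of lists between which the flat exchange conditions (*F) exchange pages: consecutive
lists on either side of the cut between `h_N` and `h_N + 1`, and list `0` with list `h_N + 1`.
The pair `(0, 1)` of condition (2) is among the consecutive ones. -/
def FlatAdj (h hN : ℕ) (i j : Fin (h + 1)) : Prop :=
  (j.val = i.val + 1 ∧ i.val ≠ hN) ∨ (i = 0 ∧ j.val = hN + 1)

lemma FlatAdj.htFlat_eq {i j : Fin (h + 1)} (hij : FlatAdj h hN i j) :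
    htFlat h hN j = htFlat h hN i + 1 := by
  simp only [FlatAdj, htFlat, Fin.ext_iff, Fin.val_zero] at hij ⊢
  split_ifs <;> lia

lemma eqvGen_flatAdj (i j : Fin (h + 1)) : Relation.EqvGen (FlatAdj h hN) i j := by
  have zero_left (i : Fin (h + 1)) : Relation.EqvGen (FlatAdj h hN) 0 i := by
    induction i using Fin.induction with
    | zero => exact .refl 0
    | succ i ih =>
      by_cases hi : i.val = hN
      · exact .rel _ _ (.inr ⟨rfl, by simp [hi]⟩)
      · exact ih.trans _ _ _ (.rel _ _ (.inl ⟨by simp, by simpa using hi⟩))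
  exact (zero_left i).symm.trans _ _ _ (zero_left j)

lemma forall_flatAdj_iff (hNh : hN < h) {P : Fin (h + 1) → Fin (h + 1) → Prop} :
    (∀ i j, FlatAdj h hN i j → P i j) ↔
      (∀ i : Fin (h + 1), 1 ≤ i.val → i.val < h → i.val ≠ hN → P i (i + 1)) ∧
      P 0 ⟨1, by omega⟩ ∧ P 0 ⟨hN + 1, by omega⟩ := by
  constructor
  · refine fun H => ⟨fun i _ hih hiN => H _ _ (.inl ⟨?_, hiN⟩), H _ _ ?_, H _ _ (.inr ⟨rfl, rfl⟩)⟩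
    · exact Fin.val_add_one_of_lt' (by lia)
    · obtain rfl | hN0 := eq_or_ne hN 0
      · exact .inr ⟨rfl, rfl⟩
      · exact .inl ⟨rfl, hN0.symm⟩
  · rintro ⟨hsucc, hone, hcut⟩ i j (⟨hij, hiN⟩ | ⟨rfl, hj⟩)
    · obtain rfl | hi := eq_or_ne i 0
      · rwa [show j = ⟨1, by omega⟩ from Fin.ext hij]
      · have hval : (i + 1).val = i.val + 1 := Fin.val_add_one_of_lt' (by lia)
        rw [show j = i + 1 from Fin.ext (hij.trans hval.symm)]
        exact hsucc i (Nat.one_le_iff_ne_zero.2 (Fin.val_ne_zero_iff.2 hi)) (by lia) hiN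
    · rwa [show j = ⟨hN + 1, by omega⟩ from Fin.ext hj]

end FlatAdj

/-- a positive probability distribution on `C_n(m)` satisfies the flat exchange
conditions (*F) if and only if it is the flat product-form distribution. -/
theorem flat_exchange_iff_product_form
    (n h hN : ℕ) (hn : 2 ≤ n) (hh : 2 ≤ h) (hN1 : 1 ≤ hN) (hNh : hN < h)
    (p : Fin n → ℝ) (hp : ∀ k, 0 < p k) (hpsum : ∑ k, p k = 1)
    (m : Fin (h+1) → ℕ) (hm : ∀ i, i ≠ 0 → 0 < m i)
    (hmn : ∑ i ∈ Finset.univ.filter (fun i : Fin (h+1) => i ≠ 0), m i < n)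
    (π : (Fin (h+1) → Finset (Fin n)) → ℝ)
    (hπpos : ∀ c ∈ cacheConfigs n h m, 0 < π c)
    (hπsum : ∑ c ∈ cacheConfigs n h m, π c = 1) :
    (∀ c ∈ cacheConfigs n h m,
      (∀ i : Fin (h+1), 1 ≤ i.val → i.val < h → i.val ≠ hN →
        ∀ u ∈ c i, ∀ v ∈ c (i + 1),
          π (swapPages n h c i (i + 1) u v) * p v = π c * p u) ∧
      (∀ k ∈ c 0, ∀ u ∈ c ⟨1, by omega⟩,
        π (swapPages n h c 0 ⟨1, by omega⟩ k u) * p u = π c * p k) ∧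
      (∀ k ∈ c 0, ∀ u ∈ c ⟨hN + 1, by omega⟩,
        π (swapPages n h c 0 ⟨hN + 1, by omega⟩ k u) * p u = π c * p k))
    ↔ (∀ c ∈ cacheConfigs n h m,
        π c = configWeight n h p (htFlat h hN) c
            / ∑ c' ∈ cacheConfigs n h m, configWeight n h p (htFlat h hN) c') := by
  simpa only [forall_flatAdj_iff hNh] using flat_exchange_iff_product_form_general
    (E := FlatAdj h hN) eqvGen_flatAdj (fun _ _ => FlatAdj.htFlat_eq) (fun k => (hp k).ne')
    hm hmn hπsum
end

section
/- Let π: C_n(m) → (0,∞) be a probability distribution (Σ_{c∈C_n(m)} π(c) = 1). Then π satisfies the layered exchange conditions (*L) if and only if π(c) = Z_L^{-1} ∏_{i=1}^h (∏_{j∈c_i} p_j)^{i} for every c ∈ C_n(m), where Z_L = Σ_{c'∈C_n(m)} ∏_{i=1}^h (∏_{j∈c'_i} p_j)^{i}. -/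
/-!
Divide `π` by the product-form weight `w`. Exchanging two pages multiplies `w` by exactly the factor
that the exchange conditions prescribe for `π`, so these conditions say that `π / w` does not change
when two pages in adjacent lists are exchanged. As the lists are nonempty and adjacency of lists is
a connected graph, any two pages are joined by a chain of pages in successively adjacent lists, so
the transpositions of pages in adjacent lists of a fixed configuration generate the full symmetric
group. That group acts transitively on the configurations; hence `π / w` is constant, and
normalization determines the constant.
-/

open Finset

/-- Layered height function: `ht_L(i) = i`. -/
def htLayer (h : ℕ) : Fin (h+1) → ℕ := fun i => i.val

open Equiv SimpleGraph
open scoped Pointwise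

section Algebra

theorem prod_mul_mul_eq_of_eqOn_compl_pair {α M : Type*} [Fintype α] [CommMonoid M]
    {f g : α → M} {u v : α} (huv : u ≠ v) (hfg : ∀ k, k ≠ u → k ≠ v → f k = g k) :
    (∏ k, f k) * (g u * g v) = (∏ k, g k) * (f u * f v) := by
  classical
  have hcompl : ∏ k ∈ {u, v}ᶜ, f k = ∏ k ∈ {u, v}ᶜ, g k :=
    prod_congr rfl fun k hk => by
      simp only [mem_compl, mem_insert, mem_singleton, not_or] at hk
      exact hfg k hk.1 hk.2
  rw [← prod_mul_prod_compl {u, v} f, ← prod_mul_prod_compl {u, v} g, hcompl,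
    prod_pair huv, prod_pair huv]
  ac_rfl

theorem mul_pow_mul_pow_succ_eq_iff {K : Type*} [CommGroupWithZero K] {a b x y : K}
    (ha : a ≠ 0) (hb : b ≠ 0) (k : ℕ) :
    x * (a ^ k * b ^ (k + 1)) = y * (b ^ k * a ^ (k + 1)) ↔ x * b = y * a := by
  have hx : x * (a ^ k * b ^ (k + 1)) = x * b * (a * b) ^ k := by
    rw [mul_pow, pow_succ]; ac_rfl
  have hy : y * (b ^ k * a ^ (k + 1)) = y * a * (a * b) ^ k := by
    rw [mul_pow, pow_succ]; ac_rfl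
  rw [hx, hy, mul_left_inj' (pow_ne_zero k (mul_ne_zero ha hb))]

theorem div_eq_div_of_mul_eq_mul_of_mul_eq_mul {K : Type*} [CommGroupWithZero K]
    {a b a' b' s t : K} (hs : s ≠ 0) (ht : t ≠ 0) (ha : a' * s = a * t) (hb : b' * s = b * t) :
    a' / b' = a / b := by
  rw [← mul_div_mul_right a' b' hs, ha, hb, mul_div_mul_right a b ht]

theorem eq_div_sum_of_mul_eq_mul {ι K : Type*} [Field K] {s : Finset ι} {f w : ι → K}
    (hf : ∑ i ∈ s, f i = 1) {i : ι} (hwi : w i ≠ 0) (h : ∀ j ∈ s, f i * w j = f j * w i) :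
    f i = w i / ∑ j ∈ s, w j := by
  have hmul : f i * ∑ j ∈ s, w j = w i := by
    rw [mul_sum, sum_congr rfl h, ← sum_mul, hf, one_mul]
  exact eq_div_of_mul_eq (right_ne_zero_of_mul (hmul ▸ hwi)) hmul

end Algebra

section SwapGeneration

variable {V W : Type*}

theorem exists_reachable_comap_of_reachable {G : SimpleGraph W} {f : V → W}
    (hf : f.Surjective) {x : V} {w : W} (h : G.Reachable (f x) w) :
    ∃ y, f y = w ∧ (G.comap f).Reachable x y := by
  rw [reachable_iff_reflTransGen] at h
  induction h with
  | refl => exact ⟨x, rfl, .rfl⟩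
  | @tail _ w' _ hadj ih =>
    obtain ⟨y, rfl, hxy⟩ := ih
    obtain ⟨z, rfl⟩ := hf w'
    exact ⟨z, rfl, hxy.trans (Adj.reachable hadj)⟩

theorem preconnected_comap_of_surjective [Nontrivial W] {G : SimpleGraph W}
    (hG : G.Preconnected) {f : V → W} (hf : f.Surjective) : (G.comap f).Preconnected := by
  intro x y
  obtain ⟨w, hw⟩ := hG.exists_adj_of_nontrivial (f y)
  obtain ⟨z, rfl, hxz⟩ := exists_reachable_comap_of_reachable hf (hG (f x) w)
  exact hxz.trans (Adj.reachable (G := G.comap f) hw.symm)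

theorem closure_swap_adj_eq_top [Finite V] [DecidableEq V] {H : SimpleGraph V}
    (hH : H.Preconnected) :
    Subgroup.closure {τ : Perm V | ∃ x y, H.Adj x y ∧ τ = swap x y} = ⊤ := by
  set S := {τ : Perm V | ∃ x y, H.Adj x y ∧ τ = swap x y}
  have hS : ∀ τ ∈ S, τ.IsSwap := by
    rintro _ ⟨x, y, hxy, rfl⟩
    exact ⟨x, y, hxy.ne, rfl⟩
  have swap_mem (x y : V) : swap x y ∈ Subgroup.closure S := by
    have hxy := hH x y
    rw [reachable_iff_reflTransGen] at hxy
    induction hxy with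
    | refl => exact swap_self x ▸ one_mem _
    | tail _ hadj ih =>
      exact SubmonoidClass.swap_mem_trans _ ih (Subgroup.subset_closure ⟨_, _, hadj, rfl⟩)
  have : MulAction.IsPretransitive (Subgroup.closure S) V :=
    ⟨fun x y => ⟨⟨swap x y, swap_mem x y⟩, swap_apply_left x y⟩⟩
  exact closure_of_isSwap_of_isPretransitive hS

end SwapGeneration

section OrderedPartition

variable {ι α β : Type*} {c d : ι → Finset α}

/-- `c` is an ordered set partition: every page is in exactly one of the lists `c i`, which may be
empty. This is the notion of configuration with list `0` treated like any other list. -/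
def IsOrderedPartition (c : ι → Finset α) : Prop :=
  ∀ x, ∃! i, x ∈ c i

namespace IsOrderedPartition

/-- The index of the list containing a given page, i.e. the configuration as a function on pages. -/
noncomputable def label (hc : IsOrderedPartition c) (x : α) : ι :=
  (hc x).choose

theorem mem_label (hc : IsOrderedPartition c) (x : α) : x ∈ c (hc.label x) :=
  (hc x).choose_spec.1

theorem label_eq_iff (hc : IsOrderedPartition c) {x : α} {i : ι} : hc.label x = i ↔ x ∈ c i :=
  ⟨fun h => h ▸ hc.mem_label x, fun h => ((hc x).choose_spec.2 i h).symm⟩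

theorem label_surjective (hc : IsOrderedPartition c) (hne : ∀ i, (c i).Nonempty) :
    hc.label.Surjective := fun i => (hne i).imp fun _ => hc.label_eq_iff.mpr

theorem eq_filter_label [Fintype α] [DecidableEq ι] (hc : IsOrderedPartition c) (i : ι) :
    c i = univ.filter (hc.label · = i) := by
  ext x
  simp only [mem_filter_univ, hc.label_eq_iff]

theorem sum_card [Fintype ι] [Fintype α] (hc : IsOrderedPartition c) :
    ∑ i, #(c i) = Fintype.card α := by
  classical
  simp only [hc.eq_filter_label, ← card_eq_sum_card_fiberwise (f := hc.label)
    (s := univ) (t := univ) fun _ _ => mem_coe.mpr (mem_univ _), card_univ]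

variable [DecidableEq α]

theorem smul (hc : IsOrderedPartition c) (σ : Perm α) : IsOrderedPartition (σ • c) := fun x => by
  simpa only [Pi.smul_apply, ← inv_smul_mem_iff] using hc (σ⁻¹ • x)

theorem exists_perm_smul_eq (hc : IsOrderedPartition c) (hd : IsOrderedPartition d)
    (hcard : ∀ i, #(c i) = #(d i)) : ∃ σ : Perm α, σ • c = d := by
  let e (i : ι) : {x // hc.label x = i} ≃ {x // hd.label x = i} :=
    (subtypeEquivRight fun _ => hc.label_eq_iff).trans <|
      (equivOfCardEq (hcard i)).trans (subtypeEquivRight fun _ => hd.label_eq_iff).symm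
  refine ⟨ofFiberEquiv e, funext fun i => ext fun x => ?_⟩
  obtain ⟨y, rfl⟩ := (ofFiberEquiv e).surjective x
  rw [Pi.smul_apply, ← Perm.smul_def, smul_mem_smul_finset_iff, ← hc.label_eq_iff,
    ← hd.label_eq_iff, Perm.smul_def, ofFiberEquiv_map e]

theorem apply_smul_eq_of_swap_invariant [Finite α] [Nontrivial ι] {G : SimpleGraph ι}
    (hG : G.Preconnected) (hc : IsOrderedPartition c) (hne : ∀ i, (c i).Nonempty)
    {r : (ι → Finset α) → β}
    (hr : ∀ (σ : Perm α) (i j : ι), G.Adj i j → ∀ u ∈ (σ • c) i, ∀ v ∈ (σ • c) j,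
      r (swap u v • σ • c) = r (σ • c))
    (σ : Perm α) : r (σ • c) = r c := by
  have hσ : σ ∈ Subgroup.closure
      {τ : Perm α | ∃ x y, (G.comap hc.label).Adj x y ∧ τ = swap x y} := by
    rw [closure_swap_adj_eq_top (preconnected_comap_of_surjective hG (hc.label_surjective hne))]
    exact Subgroup.mem_top σ
  suffices h : ∀ ρ : Perm α, r ((ρ * σ) • c) = r (ρ • c) by simpa using h 1
  induction hσ using Subgroup.closure_induction with
  | one => simp
  | mul σ τ _ _ ihσ ihτ => exact fun ρ => by rw [← mul_assoc, ihτ, ihσ]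
  | inv σ _ ih => exact fun ρ => by rw [← ih, inv_mul_cancel_right]
  | mem τ hτ =>
    obtain ⟨x, y, hxy, rfl⟩ := hτ
    intro ρ
    rw [mul_swap_eq_swap_mul, mul_smul]
    exact hr ρ _ _ hxy _ (smul_mem_smul_finset (hc.mem_label x))
      _ (smul_mem_smul_finset (hc.mem_label y))

end IsOrderedPartition

end OrderedPartition

section HeightWeight

variable {ι α M : Type*} [Fintype ι] {c : ι → Finset α}

/-- The product-form weight of a family of lists, the list `i` having height `ht i`. This is
`configWeight` for arbitrary types of lists and pages. -/
def heightWeight [CommMonoid M] (p : α → M) (ht : ι → ℕ) (c : ι → Finset α) : M :=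
  ∏ i, (∏ k ∈ c i, p k) ^ ht i

theorem heightWeight_ne_zero {K : Type*} [CommGroupWithZero K] {p : α → K} (hp : ∀ k, p k ≠ 0)
    (ht : ι → ℕ) (c : ι → Finset α) : heightWeight p ht c ≠ 0 :=
  prod_ne_zero_iff.mpr fun _ _ =>
    pow_ne_zero _ (prod_ne_zero_iff.mpr fun k _ => hp k)

variable [CommMonoid M]

theorem heightWeight_smul_eq_prod_label [Fintype α] [DecidableEq α] (hc : IsOrderedPartition c)
    (p : α → M) (ht : ι → ℕ) (σ : Perm α) :
    heightWeight p ht (σ • c) = ∏ k, p (σ k) ^ ht (hc.label k) := by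
  classical
  rw [← prod_fiberwise univ hc.label]
  refine prod_congr rfl fun i _ => ?_
  rw [← prod_pow, Pi.smul_apply, smul_finset_def,
    prod_image (MulAction.injective σ).injOn, hc.eq_filter_label]
  refine prod_congr rfl fun k hk => ?_
  rw [(mem_filter.mp hk).2, Perm.smul_def]

theorem heightWeight_swap_smul_mul [Finite α] [DecidableEq α] (hc : IsOrderedPartition c)
    (p : α → M) (ht : ι → ℕ) {i j : ι} (hij : i ≠ j) {u v : α} (hu : u ∈ c i) (hv : v ∈ c j) :
    heightWeight p ht (swap u v • c) * (p u ^ ht i * p v ^ ht j) =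
      heightWeight p ht c * (p v ^ ht i * p u ^ ht j) := by
  have := Fintype.ofFinite α
  obtain rfl := hc.label_eq_iff.mpr hu
  obtain rfl := hc.label_eq_iff.mpr hv
  have huv : u ≠ v := fun h => hij (congrArg hc.label h)
  have h := prod_mul_mul_eq_of_eqOn_compl_pair (f := fun k => p (swap u v k) ^ ht (hc.label k))
    (g := fun k => p k ^ ht (hc.label k)) huv fun k hku hkv => by
      rw [swap_apply_of_ne_of_ne hku hkv]
  have hone := heightWeight_smul_eq_prod_label hc p ht 1
  simp only [one_smul, Perm.one_apply] at hone
  rw [hone, heightWeight_smul_eq_prod_label hc]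
  simpa only [swap_apply_left, swap_apply_right] using h

end HeightWeight

theorem layered_exchange_iff_product_form_general {ι α K : Type*} [Fintype ι] [Nontrivial ι]
    [Finite α] [DecidableEq α] [Field K] {G : SimpleGraph ι} (hG : G.Preconnected)
    {p : α → K} (hp : ∀ k, p k ≠ 0) (ht : ι → ℕ) {m : ι → ℕ} (hm : ∀ i, 0 < m i)
    {C : Finset (ι → Finset α)}
    (hC : ∀ c, c ∈ C ↔ IsOrderedPartition c ∧ ∀ i, #(c i) = m i)
    {π : (ι → Finset α) → K} (hπsum : ∑ c ∈ C, π c = 1) :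
    (∀ c ∈ C, ∀ i j, G.Adj i j → ∀ u ∈ c i, ∀ v ∈ c j,
      π (swap u v • c) * (p u ^ ht i * p v ^ ht j) = π c * (p v ^ ht i * p u ^ ht j)) ↔
    ∀ c ∈ C, π c = heightWeight p ht c / ∑ c' ∈ C, heightWeight p ht c' := by
  have smul_mem (σ : Perm α) {c} (hc : c ∈ C) : σ • c ∈ C := by
    rw [hC] at hc ⊢
    exact ⟨hc.1.smul σ, fun i => (card_smul_finset σ (c i)).trans (hc.2 i)⟩
  have hw := heightWeight_ne_zero hp ht
  constructor
  · intro hex c hc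
    refine eq_div_sum_of_mul_eq_mul hπsum (hw c) fun d hd => ?_
    obtain ⟨hcP, hccard⟩ := (hC c).mp hc
    obtain ⟨hdP, hdcard⟩ := (hC d).mp hd
    obtain ⟨σ, rfl⟩ := hcP.exists_perm_smul_eq hdP fun i => (hccard i).trans (hdcard i).symm
    have hne (i : ι) : (c i).Nonempty := card_pos.mp (hccard i ▸ hm i)
    have hratio : π (σ • c) / heightWeight p ht (σ • c) = π c / heightWeight p ht c := by
      refine hcP.apply_smul_eq_of_swap_invariant hG hne
        (r := fun e => π e / heightWeight p ht e) (fun τ i j hij u hu v hv => ?_) σ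
      have hτ : IsOrderedPartition (τ • c) := hcP.smul τ
      exact div_eq_div_of_mul_eq_mul_of_mul_eq_mul
        (mul_ne_zero (pow_ne_zero _ (hp u)) (pow_ne_zero _ (hp v)))
        (mul_ne_zero (pow_ne_zero _ (hp v)) (pow_ne_zero _ (hp u)))
        (hex _ (smul_mem τ hc) i j hij u hu v hv)
        (heightWeight_swap_smul_mul hτ p ht hij.ne hu hv)
    exact ((div_eq_div_iff (hw _) (hw _)).mp hratio).symm
  · intro hprod c hc i j hij u hu v hv
    rw [hprod _ (smul_mem _ hc), hprod c hc, div_mul_eq_mul_div, div_mul_eq_mul_div,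
      heightWeight_swap_smul_mul ((hC c).mp hc).1 p ht hij.ne hu hv]

section CacheConfig

variable {n h : ℕ} {m : Fin (h + 1) → ℕ} {c : Fin (h + 1) → Finset (Fin n)}

theorem isCacheConfig_iff_isOrderedPartition :
    IsCacheConfig n h m c ↔ IsOrderedPartition c ∧ ∀ i, i ≠ 0 → #(c i) = m i := by
  constructor
  · rintro ⟨hcard, hdisj, hcover⟩
    refine ⟨fun x => ?_, hcard⟩
    obtain ⟨i, -, hi⟩ := mem_biUnion.mp (hcover.symm ▸ mem_univ x)
    refine ⟨i, hi, fun j hj => ?_⟩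
    by_contra hji
    exact disjoint_left.mp (hdisj j i hji) hj hi
  · rintro ⟨hc, hcard⟩
    refine ⟨hcard, fun i j hij => ?_, ?_⟩
    · exact disjoint_left.mpr fun x hi hj => hij ((hc x).unique hi hj)
    · exact eq_univ_of_forall fun x =>
        mem_biUnion.mpr ⟨hc.label x, mem_univ _, hc.mem_label x⟩

/-- The sizes of all lists, list `0` consisting of the pages which are in no cache list. -/
def listSizes (n : ℕ) {h : ℕ} (m : Fin (h + 1) → ℕ) : Fin (h + 1) → ℕ :=
  Function.update m 0 (n - ∑ i with i ≠ 0, m i)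

theorem listSizes_pos (hm : ∀ i, i ≠ 0 → 0 < m i) (hmn : ∑ i with i ≠ 0, m i < n)
    (i : Fin (h + 1)) : 0 < listSizes n m i := by
  by_cases hi : i = 0
  · subst hi
    simpa [listSizes] using hmn
  · simpa [listSizes, hi] using hm i hi

theorem mem_cacheConfigs_iff :
    c ∈ cacheConfigs n h m ↔ IsOrderedPartition c ∧ ∀ i, #(c i) = listSizes n m i := by
  classical
  rw [cacheConfigs, mem_filter_univ, isCacheConfig_iff_isOrderedPartition]
  refine and_congr_right fun hc => ⟨fun hcard i => ?_, fun hcard i hi => ?_⟩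
  · by_cases hi : i = 0
    · subst hi
      have hsum := hc.sum_card
      rw [← add_sum_erase _ _ (mem_univ 0), Fintype.card_fin,
        sum_congr rfl fun i hi => hcard i (ne_of_mem_erase hi)] at hsum
      rw [listSizes, Function.update_self, filter_ne']
      exact Nat.eq_sub_of_add_eq hsum
    · rw [hcard i hi, listSizes, Function.update_of_ne hi]
  · rw [hcard i, listSizes, Function.update_of_ne hi]

theorem swapPages_eq_swap_smul (hc : IsOrderedPartition c) {i j : Fin (h + 1)} (hij : i ≠ j)
    {u v : Fin n} (hu : u ∈ c i) (hv : v ∈ c j) :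
    swapPages n h c i j u v = swap u v • c := by
  have hiff {x : Fin n} {k l : Fin (h + 1)} (hx : x ∈ c k) : x ∈ c l ↔ l = k :=
    ⟨fun hl => (hc x).unique hl hx, fun hl => hl ▸ hx⟩
  funext l
  ext x
  rw [Pi.smul_apply, ← inv_smul_mem_iff, Perm.smul_def, swap_inv, swap_apply_def]
  unfold swapPages
  grind

theorem forall_consecutive_iff_forall_pathGraph_adj {p : Fin n → ℝ} (hp : ∀ k, p k ≠ 0)
    {π : (Fin (h + 1) → Finset (Fin n)) → ℝ} (hc : IsOrderedPartition c) :
    (∀ i j : Fin (h + 1), i.val + 1 = j.val → ∀ u ∈ c i, ∀ v ∈ c j,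
      π (swapPages n h c i j u v) * p v = π c * p u) ↔
    ∀ i j, (pathGraph (h + 1)).Adj i j → ∀ u ∈ c i, ∀ v ∈ c j,
      π (swap u v • c) * (p u ^ htLayer h i * p v ^ htLayer h j) =
        π c * (p v ^ htLayer h i * p u ^ htLayer h j) := by
  have hconsecutive (i j : Fin (h + 1)) (hij : i.val + 1 = j.val) (u) (hu : u ∈ c i)
      (v) (hv : v ∈ c j) : π (swapPages n h c i j u v) * p v = π c * p u ↔
        π (swap u v • c) * (p u ^ htLayer h i * p v ^ htLayer h j) =
          π c * (p v ^ htLayer h i * p u ^ htLayer h j) := by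
    have hne : i ≠ j := by
      rintro rfl
      omega
    rw [swapPages_eq_swap_smul hc hne hu hv, htLayer, htLayer, ← hij,
      mul_pow_mul_pow_succ_eq_iff (hp u) (hp v)]
  constructor
  · intro hex i j hij u hu v hv
    rcases pathGraph_adj.mp hij with hij | hji
    · exact (hconsecutive i j hij u hu v hv).mp (hex i j hij u hu v hv)
    · rw [swap_comm, mul_comm (p u ^ _), mul_comm (p v ^ htLayer h i)]
      exact (hconsecutive j i hji v hv u hu).mp (hex j i hji v hv u hu)
  · intro hex i j hij u hu v hv
    exact (hconsecutive i j hij u hu v hv).mpr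
      (hex i j (pathGraph_adj.mpr (.inl hij)) u hu v hv)

theorem layered_exchange_iff_forall_pathGraph_adj {p : Fin n → ℝ} (hp : ∀ k, p k ≠ 0)
    {π : (Fin (h + 1) → Finset (Fin n)) → ℝ} (hh : 0 < h) (hc : IsOrderedPartition c) :
    ((∀ i : Fin (h + 1), 1 ≤ i.val → i.val < h → ∀ u ∈ c i, ∀ v ∈ c (i + 1),
        π (swapPages n h c i (i + 1) u v) * p v = π c * p u) ∧
      (∀ k ∈ c 0, ∀ u ∈ c ⟨1, by omega⟩,
        π (swapPages n h c 0 ⟨1, by omega⟩ k u) * p u = π c * p k)) ↔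
    ∀ i j, (pathGraph (h + 1)).Adj i j → ∀ u ∈ c i, ∀ v ∈ c j,
      π (swap u v • c) * (p u ^ htLayer h i * p v ^ htLayer h j) =
        π c * (p v ^ htLayer h i * p u ^ htLayer h j) := by
  rw [← forall_consecutive_iff_forall_pathGraph_adj hp hc]
  have val_add_one (i : Fin (h + 1)) (hi : i.val < h) : (i + 1).val = i.val + 1 :=
    Fin.val_add_one_of_lt (Fin.lt_def.mpr hi)
  constructor
  · rintro ⟨hcache, hreplace⟩ i j hij
    by_cases hi : i.val = 0
    · obtain rfl : i = 0 := Fin.ext hi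
      have hj : j = ⟨1, by omega⟩ := Fin.ext (by rw [← hij, hi])
      exact hj ▸ hreplace
    · have hih : i.val < h := by omega
      obtain rfl : j = i + 1 := Fin.ext (by rw [val_add_one i hih, hij])
      exact hcache i (by omega) hih
  · intro hex
    exact ⟨fun i _ hi => hex i (i + 1) (val_add_one i hi).symm, hex 0 ⟨1, by omega⟩ rfl⟩

end CacheConfig

/-- a positive probability distribution on `C_n(m)` satisfies the layered
exchange conditions (*L) if and only if it is the layered product-form distribution. -/
theorem layered_exchange_iff_product_form
    (n h : ℕ) (hn : 2 ≤ n) (hh : 2 ≤ h)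
    (p : Fin n → ℝ) (hp : ∀ k, 0 < p k) (hpsum : ∑ k, p k = 1)
    (m : Fin (h+1) → ℕ) (hm : ∀ i, i ≠ 0 → 0 < m i)
    (hmn : ∑ i ∈ Finset.univ.filter (fun i : Fin (h+1) => i ≠ 0), m i < n)
    (π : (Fin (h+1) → Finset (Fin n)) → ℝ)
    (hπpos : ∀ c ∈ cacheConfigs n h m, 0 < π c)
    (hπsum : ∑ c ∈ cacheConfigs n h m, π c = 1) :
    (∀ c ∈ cacheConfigs n h m,
      (∀ i : Fin (h+1), 1 ≤ i.val → i.val < h →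
        ∀ u ∈ c i, ∀ v ∈ c (i + 1),
          π (swapPages n h c i (i + 1) u v) * p v = π c * p u) ∧
      (∀ k ∈ c 0, ∀ u ∈ c ⟨1, by omega⟩,
        π (swapPages n h c 0 ⟨1, by omega⟩ k u) * p u = π c * p k))
    ↔ (∀ c ∈ cacheConfigs n h m,
        π c = configWeight n h p (htLayer h) c
            / ∑ c' ∈ cacheConfigs n h m, configWeight n h p (htLayer h) c') := by
  have hp₀ (k : Fin n) : p k ≠ 0 := (hp k).ne'
  have : Nontrivial (Fin (h + 1)) := Fin.nontrivial_iff_two_le.mpr (by omega)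
  exact (forall₂_congr fun _ hc => layered_exchange_iff_forall_pathGraph_adj hp₀ (by omega)
      (mem_cacheConfigs_iff.mp hc).1).trans <|
    layered_exchange_iff_product_form_general (pathGraph_preconnected (h + 1)) hp₀ (htLayer h)
      (listSizes_pos hm hmn) (fun _ => mem_cacheConfigs_iff) hπsum
end

section
/- Assume h_N ≥ 2, h − h_N ≥ 2 and m_1+…+m_h < n, and let ht = ht_F be the flat height function. Let s ∈ (0,∞)^h satisfy D_i(s) = m_i for all i. Define x_{k,0} = 1/(1 + Σ_{j=1}^h p_k^{ht(j)} s_j), x_{k,i} = p_k^{ht(i)} s_i x_{k,0} for 1 ≤ i ≤ h, and H_i = Σ_{k=1}^n p_k x_{k,i} for 0 ≤ i ≤ h. Then for every α ∈ [0,1] and every page k, all flat-architecture ODE right-hand sides vanish at x: (i) for i ∉ {0, 1, h_N, h_N+1, h}: p_k x_{k,i−1} − H_{i−1} x_{k,i}/m_i + H_i x_{k,i+1}/m_{i+1} − p_k x_{k,i} = 0; (ii) for i = h_N and i = h: p_k x_{k,i−1} − H_{i−1} x_{k,i}/m_i = 0; (iii) for i = 1: (1−α) p_k x_{k,0} − (1−α)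 H_0 x_{k,1}/m_1 + H_1 x_{k,2}/m_2 − p_k x_{k,1} = 0; (iv) for i = h_N+1: α p_k x_{k,0} − α H_0 x_{k,h_N+1}/m_{h_N+1} + H_{h_N+1} x_{k,h_N+2}/m_{h_N+2} − p_k x_{k,h_N+1} = 0; (v) for i = 0: (1−α) H_0 x_{k,1}/m_1 + α H_0 x_{k,h_N+1}/m_{h_N+1} − p_k x_{k,0} = 0. In particular the fixed point of the flat mean-field ODEs is independent of α. -/
/-!
Detailed balance holds along every edge `a → b` of the flat architecture. Since
`ht b = ht a + 1`, the column `x_{·,b}` is proportional to `k ↦ p_k x_{k,a}`; the former sums to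
`m_b` and the latter to `H_a`, so the flow `H_a x_{k,b} / m_b` of page `k` from `b` to `a` equals
its flow `p_k x_{k,a}` from `a` to `b`. Every right-hand side is a linear combination of such
differences of flows, and `α` only enters the coefficients.
-/

open Finset

/-- The height function `ht_F` of the flat architecture: the lists `1, …, hN` and `hN + 1, …, h`
form two chains hanging off the list `0` of uncached pages, which has height `0`. -/
def flatHeight (hN i : ℕ) : ℕ :=
  if i ≤ hN then i else i - hN

lemma flatHeight_zero (hN : ℕ) : flatHeight hN 0 = 0 :=
  if_pos hN.zero_le

lemma flatHeight_succ {hN i : ℕ} (hi : i ≠ hN) :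
    flatHeight hN (i + 1) = flatHeight hN i + 1 := by
  unfold flatHeight
  split_ifs <;> omega

lemma flatHeight_succ_self (hN : ℕ) : flatHeight hN (hN + 1) = 1 := by
  simp [flatHeight]

/-- The rate `H_i = ∑ₖ pₖ x_{k,i}` of requests for pages in list `i`, where `p k` is the
popularity of page `k` and `x k i` is the probability that page `k` is in list `i`. -/
def hitRate {ι J R : Type*} [Fintype ι] [CommSemiring R] (p : ι → R) (x : ι → J → R) (i : J) : R :=
  ∑ k, p k * x k i

lemma hitRate_mul_eq_mul_sum {ι J R : Type*} [Fintype ι] [CommSemiring R] {p u : ι → R}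
    {x : ι → J → R} {a b : J} {c d : R} (ha : ∀ k, x k a = c * u k)
    (hb : ∀ k, x k b = d * (p k * u k)) (k : ι) :
    hitRate p x a * x k b = p k * x k a * ∑ l, x l b := by
  simp only [hitRate, ha, hb, sum_mul, mul_sum]
  exact sum_congr rfl fun l _ => by ring

section ProductForm

variable {ι K : Type*} [Fintype ι] [Field K] {h : ℕ} {p : ι → K} {m s : ℕ → K} {x : ι → ℕ → K}

theorem hitRate_mul_div_eq_of_height_eq_succ {ht : ℕ → ℕ} (ht0 : ht 0 = 0)
    (hx : ∀ k, ∀ i, 1 ≤ i → i ≤ h → x k i = p k ^ ht i * s i * x k 0)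
    {a b : ℕ} (ha : a ≤ h) (hb : b ≤ h) (hab : ht b = ht a + 1)
    (hm : m b ≠ 0) (hsum : ∑ k, x k b = m b) (k : ι) :
    hitRate p x a * x k b / m b = p k * x k a := by
  have hb1 : 1 ≤ b := Nat.one_le_iff_ne_zero.2 fun hb0 => by simp [hb0, ht0] at hab
  obtain ⟨c, hc⟩ : ∃ c, ∀ l, x l a = c * (p l ^ ht a * x l 0) := by
    rcases a.eq_zero_or_pos with rfl | ha1
    · exact ⟨1, fun l => by simp [ht0]⟩
    · exact ⟨s a, fun l => by rw [hx l a ha1 ha]; ring⟩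
  have hd (l : ι) : x l b = s b * (p l * (p l ^ ht a * x l 0)) := by
    rw [hx l b hb1 hb, hab]; ring
  rw [div_eq_iff hm, hitRate_mul_eq_mul_sum hc hd, hsum]

theorem flat_fixed_point_of_ODEs_general {hN : ℕ} (hN2 : 2 ≤ hN) (hNh : hN + 2 ≤ h)
    (hm : ∀ i, 1 ≤ i → i ≤ h → m i ≠ 0)
    (hx : ∀ k, ∀ i, 1 ≤ i → i ≤ h → x k i = p k ^ flatHeight hN i * s i * x k 0)
    (hsum : ∀ i, 1 ≤ i → i ≤ h → ∑ k, x k i = m i) (α : K) :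
    (∀ (k : ι) (i : ℕ), 1 < i → i < h → i ≠ hN → i ≠ hN + 1 →
      p k * x k (i - 1) - hitRate p x (i - 1) * x k i / m i
        + hitRate p x i * x k (i + 1) / m (i + 1) - p k * x k i = 0) ∧
    (∀ (k : ι) (i : ℕ), (i = hN ∨ i = h) →
      p k * x k (i - 1) - hitRate p x (i - 1) * x k i / m i = 0) ∧
    (∀ k : ι,
      (1 - α) * (p k * x k 0) - (1 - α) * (hitRate p x 0 * x k 1 / m 1)
        + hitRate p x 1 * x k 2 / m 2 - p k * x k 1 = 0) ∧
    (∀ k : ι,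
      α * (p k * x k 0) - α * (hitRate p x 0 * x k (hN + 1) / m (hN + 1))
        + hitRate p x (hN + 1) * x k (hN + 2) / m (hN + 2) - p k * x k (hN + 1) = 0) ∧
    (∀ k : ι,
      (1 - α) * (hitRate p x 0 * x k 1 / m 1)
        + α * (hitRate p x 0 * x k (hN + 1) / m (hN + 1)) - p k * x k 0 = 0) := by
  have chain {i : ℕ} (hi : i < h) (hiN : i ≠ hN) (k : ι) :
      hitRate p x i * x k (i + 1) / m (i + 1) = p k * x k i :=
    hitRate_mul_div_eq_of_height_eq_succ (flatHeight_zero hN) hx hi.le hi (flatHeight_succ hiN)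
      (hm _ i.succ_pos hi) (hsum _ i.succ_pos hi) k
  have branch (k : ι) : hitRate p x 0 * x k (hN + 1) / m (hN + 1) = p k * x k 0 :=
    hitRate_mul_div_eq_of_height_eq_succ (flatHeight_zero hN) hx h.zero_le (by omega)
      (by rw [flatHeight_succ_self, flatHeight_zero]) (hm _ hN.succ_pos (by omega))
      (hsum _ hN.succ_pos (by omega)) k
  have entry (k : ι) : hitRate p x 0 * x k 1 / m 1 = p k * x k 0 :=
    chain (by omega) (by omega) k
  have pred {i : ℕ} (h1 : 1 ≤ i) (hi : i ≤ h) (hiN : i ≠ hN + 1) (k : ι) :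
      hitRate p x (i - 1) * x k i / m i = p k * x k (i - 1) := by
    simpa only [Nat.sub_add_cancel h1] using chain (i := i - 1) (by omega) (by omega) k
  refine ⟨fun k i h1 hi hiN hiN1 => ?_, fun k i hi => ?_, fun k => ?_, fun k => ?_, fun k => ?_⟩
  · rw [pred h1.le hi.le hiN1, chain hi hiN]; ring
  · rw [pred (by omega) (by omega) (by omega), sub_self]
  · rw [entry, chain (by omega) (by omega)]; ring
  · rw [branch, chain (by omega) (by omega)]; ring
  · rw [entry, branch]; ring

end ProductForm

/-- with `ht = ht_F` the flat height function, if `s ∈ (0,∞)^h` satisfies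
`D_i(s) = m_i` for all `i = 1,…,h`, then the point `x` given by
`x_{k,0} = 1/(1 + Σ_{j=1}^h p_k^{ht(j)} s_j)`, `x_{k,i} = p_k^{ht(i)} s_i x_{k,0}`
makes all flat-architecture mean-field ODE right-hand sides vanish, for every
`α ∈ [0,1]`; in particular the fixed point is independent of `α`. -/
theorem flat_fixed_point_of_ODEs
    (n h hN : ℕ) (hn : 2 ≤ n) (hN2 : 2 ≤ hN) (hNh : hN + 2 ≤ h)
    (p : Fin n → ℝ) (hp : ∀ k, 0 < p k)
    (m : ℕ → ℝ) (hm : ∀ i, 1 ≤ i → i ≤ h → 0 < m i)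
    (hmn : ∑ i ∈ Finset.Icc 1 h, m i < (n : ℝ))
    (ht : ℕ → ℕ) (hht : ∀ i, ht i = if i ≤ hN then i else i - hN)
    (s : ℕ → ℝ) (hs : ∀ i, 1 ≤ i → i ≤ h → 0 < s i)
    (hsD : ∀ i, 1 ≤ i → i ≤ h →
      (∑ k, p k ^ ht i * s i / (1 + ∑ j ∈ Finset.Icc 1 h, p k ^ ht j * s j)) = m i)
    (x : Fin n → ℕ → ℝ)
    (hx0 : ∀ k, x k 0 = 1 / (1 + ∑ j ∈ Finset.Icc 1 h, p k ^ ht j * s j))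
    (hxi : ∀ k, ∀ i, 1 ≤ i → i ≤ h → x k i = p k ^ ht i * s i * x k 0)
    (H : ℕ → ℝ) (hH : ∀ i, H i = ∑ k, p k * x k i)
    (α : ℝ) (hα0 : 0 ≤ α) (hα1 : α ≤ 1) :
    (∀ (k : Fin n) (i : ℕ), 1 < i → i < h → i ≠ hN → i ≠ hN + 1 →
      p k * x k (i - 1) - H (i - 1) * x k i / m i
        + H i * x k (i + 1) / m (i + 1) - p k * x k i = 0) ∧
    (∀ (k : Fin n) (i : ℕ), (i = hN ∨ i = h) →
      p k * x k (i - 1) - H (i - 1) * x k i / m i = 0) ∧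
    (∀ k : Fin n,
      (1 - α) * (p k * x k 0) - (1 - α) * (H 0 * x k 1 / m 1)
        + H 1 * x k 2 / m 2 - p k * x k 1 = 0) ∧
    (∀ k : Fin n,
      α * (p k * x k 0) - α * (H 0 * x k (hN + 1) / m (hN + 1))
        + H (hN + 1) * x k (hN + 2) / m (hN + 2) - p k * x k (hN + 1) = 0) ∧
    (∀ k : Fin n,
      (1 - α) * (H 0 * x k 1 / m 1) + α * (H 0 * x k (hN + 1) / m (hN + 1))
        - p k * x k 0 = 0) := by
  obtain rfl : ht = flatHeight hN := funext hht
  obtain rfl : H = hitRate p x := funext hH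
  exact flat_fixed_point_of_ODEs_general hN2 hNh (fun i h1 hi => (hm i h1 hi).ne') hxi
    (fun i h1 hi => hsD i h1 hi ▸ sum_congr rfl fun k _ => by rw [hxi k i h1 hi, hx0, mul_one_div])
    α
end

section
/- Assume m_1+…+m_h < n, and let ht = ht_L be the layered height function (ht(i) = i). Let s ∈ (0,∞)^h satisfy D_i(s) = m_i for all i. Define x_{k,0} = 1/(1 + Σ_{j=1}^h p_k^{j} s_j), x_{k,i} = p_k^{i} s_i x_{k,0} for 1 ≤ i ≤ h, and H_i = Σ_{k=1}^n p_k x_{k,i} for 0 ≤ i ≤ h. Then for every page k, all layered-architecture ODE right-hand sides vanish at x: for 1 ≤ i ≤ h−1: p_k x_{k,i−1} − H_{i−1} x_{k,i}/m_i + H_i x_{k,i+1}/m_{i+1} − p_k x_{k,i} = 0; for i = h: p_k x_{k,h−1} − H_{h−1} x_{k,h}/m_h = 0; and for i = 0: H_0 x_{k,1}/m_1 − p_k x_{k,0} = 0. -/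
open Finset

/-!
With the convention `σ 0 = 1` and `σ i = s i` for `i ≥ 1`, one has `x k i = p k ^ i * σ i * x k 0`.
Hence `p k * x k i` and `x k (i + 1)` are, as functions of the page `k`, both multiples of
`p k ^ (i + 1) * x k 0`, so they agree after division by their sums over all pages. These sums are
`H i` and, by the equations `D_{i+1}(s) = m_{i+1}`, `m (i + 1)`. The result is detailed balance
between adjacent layers, `H i * x k (i + 1) / m (i + 1) = p k * x k i` for `0 ≤ i < h`, and every
right-hand side is a sum of differences of such balanced pairs.
-/

theorem sum_mul_eq_mul_sum_of_proportional {ι R : Type*} [Fintype ι] [CommSemiring R]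
    {u v w : ι → R} {a b : R} (hu : ∀ k, u k = a * w k) (hv : ∀ k, v k = b * w k) (k : ι) :
    (∑ l, u l) * v k = u k * ∑ l, v l := by
  simp only [hu, hv, ← mul_sum]
  ring

theorem detailed_balance_of_product_form {ι K : Type*} [Fintype ι] [Semifield K]
    {p w y z : ι → K} {a b : K} {i : ℕ} (hy : ∀ k, y k = p k ^ i * a * w k)
    (hz : ∀ k, z k = p k ^ (i + 1) * b * w k) (hz₀ : ∑ l, z l ≠ 0) (k : ι) :
    (∑ l, p l * y l) * z k / ∑ l, z l = p k * y k := by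
  have hpy (l : ι) : p l * y l = a * (p l ^ (i + 1) * w l) := by rw [hy]; ring
  have hz' (l : ι) : z l = b * (p l ^ (i + 1) * w l) := by rw [hz]; ring
  rw [div_eq_iff hz₀]
  exact sum_mul_eq_mul_sum_of_proportional hpy hz' k

theorem product_form_update_zero {ι M : Type*} [Monoid M] {h : ℕ} {p : ι → M} {s : ℕ → M}
    {x : ι → ℕ → M} (hx : ∀ k, ∀ i, 1 ≤ i → i ≤ h → x k i = p k ^ i * s i * x k 0)
    {i : ℕ} (hi : i ≤ h) (k : ι) :
    x k i = p k ^ i * Function.update s 0 1 i * x k 0 := by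
  obtain rfl | hi₀ := eq_or_ne i 0
  · simp
  · rw [Function.update_of_ne hi₀, hx k i (Nat.one_le_iff_ne_zero.mpr hi₀) hi]

theorem layered_fixed_point_of_ODEs_general {ι K : Type*} [Fintype ι] [Field K]
    {h : ℕ} (hh : 1 ≤ h) {p : ι → K} {m s : ℕ → K} (hm : ∀ i, 1 ≤ i → i ≤ h → m i ≠ 0)
    {x : ι → ℕ → K} (hx : ∀ k, ∀ i, 1 ≤ i → i ≤ h → x k i = p k ^ i * s i * x k 0)
    (hxm : ∀ i, 1 ≤ i → i ≤ h → ∑ k, x k i = m i)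
    {H : ℕ → K} (hH : ∀ i, H i = ∑ k, p k * x k i) :
    (∀ (k : ι) (i : ℕ), 1 ≤ i → i ≤ h - 1 →
      p k * x k (i - 1) - H (i - 1) * x k i / m i
        + H i * x k (i + 1) / m (i + 1) - p k * x k i = 0) ∧
    (∀ k : ι, p k * x k (h - 1) - H (h - 1) * x k h / m h = 0) ∧
    (∀ k : ι, H 0 * x k 1 / m 1 - p k * x k 0 = 0) := by
  have balance (k : ι) (i : ℕ) (hi : i < h) :
      H i * x k (i + 1) / m (i + 1) = p k * x k i := by
    have hxm' := hxm (i + 1) i.succ_pos hi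
    rw [hH, ← hxm']
    exact detailed_balance_of_product_form (product_form_update_zero hx hi.le)
      (product_form_update_zero hx hi) (hxm' ▸ hm (i + 1) i.succ_pos hi) k
  have balance_pred (k : ι) (i : ℕ) (hi₁ : 1 ≤ i) (hi : i ≤ h) :
      H (i - 1) * x k i / m i = p k * x k (i - 1) := by
    simpa only [Nat.sub_add_cancel hi₁] using balance k (i - 1) (by lia)
  refine ⟨fun k i hi₁ hi => ?_, fun k => ?_, fun k => ?_⟩
  · rw [balance_pred k i hi₁ (by lia), balance k i (by lia), sub_self, zero_add, sub_self]
  · rw [balance_pred k h hh le_rfl, sub_self]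
  · rw [balance k 0 hh, sub_self]

/-- with the layered height function `ht(i) = i`, if `s ∈ (0,∞)^h` satisfies
`D_i(s) = m_i` for all `i = 1,…,h`, then the point `x` given by
`x_{k,0} = 1/(1 + Σ_{j=1}^h p_k^j s_j)`, `x_{k,i} = p_k^i s_i x_{k,0}` makes all
layered-architecture mean-field ODE right-hand sides vanish. -/
theorem layered_fixed_point_of_ODEs
    (n h : ℕ) (hn : 2 ≤ n) (hh : 2 ≤ h)
    (p : Fin n → ℝ) (hp : ∀ k, 0 < p k)
    (m : ℕ → ℝ) (hm : ∀ i, 1 ≤ i → i ≤ h → 0 < m i)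
    (hmn : ∑ i ∈ Finset.Icc 1 h, m i < (n : ℝ))
    (s : ℕ → ℝ) (hs : ∀ i, 1 ≤ i → i ≤ h → 0 < s i)
    (hsD : ∀ i, 1 ≤ i → i ≤ h →
      (∑ k, p k ^ i * s i / (1 + ∑ j ∈ Finset.Icc 1 h, p k ^ j * s j)) = m i)
    (x : Fin n → ℕ → ℝ)
    (hx0 : ∀ k, x k 0 = 1 / (1 + ∑ j ∈ Finset.Icc 1 h, p k ^ j * s j))
    (hxi : ∀ k, ∀ i, 1 ≤ i → i ≤ h → x k i = p k ^ i * s i * x k 0)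
    (H : ℕ → ℝ) (hH : ∀ i, H i = ∑ k, p k * x k i) :
    (∀ (k : Fin n) (i : ℕ), 1 ≤ i → i ≤ h - 1 →
      p k * x k (i - 1) - H (i - 1) * x k i / m i
        + H i * x k (i + 1) / m (i + 1) - p k * x k i = 0) ∧
    (∀ k : Fin n, p k * x k (h - 1) - H (h - 1) * x k h / m h = 0) ∧
    (∀ k : Fin n, H 0 * x k 1 / m 1 - p k * x k 0 = 0) :=
  layered_fixed_point_of_ODEs_general (one_le_two.trans hh) (fun i h₁ hi => (hm i h₁ hi).ne') hxi
    (fun i h₁ hi => by simpa only [hxi _ i h₁ hi, hx0, mul_one_div] using hsD i h₁ hi) hH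
end

section
/- Consider the one-step flat-architecture cache dynamics started from configuration c ∈ C_n(m): a page j is requested with probability p_j; if j is in list 0 then with probability α it exchanges with a uniformly random page of list h_N+1 and with probability 1−α with a uniformly random page of list 1; if j lies in list i with i ∉ {h_N, h} it exchanges with a uniformly random page of list i+1; if j lies in list h_N or list h nothing changes. Let X_{k,i}(c) ∈ {0,1} indicate that page k is in list i of c, and H_l(c) = Σ_{j=1}^n p_j X_{j,l}(c). Then for every page k and every list i with i ∉ {0, 1, h_N, h_N+1, h}, the expected one-step change of X_{k,i} equals p_k X_{k,i−1}(c) − H_{i−1}(c) X_{k,i}(c)/m_i + H_i(c) X_{k,i+1}(c)/m_{i+1} − p_k X_{k,i}(c). -/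
/-!
By linearity the expected change is a sum over pairs `(a, b)` of lists of the change caused by
requests hitting list `a` and exchanging with list `b`. Such an exchange moves page `k` from `a` to
`b` when `k` is the requested page and from `b` to `a` when `k` is the evicted one, so it carries
the expected net flow `p k * X k a - H a * X k b / m b` out of list `a` and into list `b`. A middle
list `i` receives the flow from list `i - 1` and loses the flow to list `i + 1`; every other
exchange, in particular every miss, leaves it untouched.
-/

open Finset

/-- The indicator `X_{k,i}(c)` that page `k` is in list `i`. -/
def listIndicator {n h : ℕ} (c : Fin (h + 1) → Finset (Fin n)) (k : Fin n) (i : Fin (h + 1)) : ℝ :=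
  if k ∈ c i then 1 else 0

/-- The total popularity `H_l(c)` of the pages of list `l`. -/
noncomputable def listPopularity {n h : ℕ} (p : Fin n → ℝ) (c : Fin (h + 1) → Finset (Fin n))
    (l : Fin (h + 1)) : ℝ :=
  ∑ j, p j * listIndicator c j l

/-- The mean change of `X_{k,i}` when page `j` of list `a` is exchanged with a uniformly random page
of list `b`. The mean is taken with the nominal size `m b` of list `b`. -/
noncomputable def meanExchangeChange {n h : ℕ} (m : Fin (h + 1) → ℕ)
    (c : Fin (h + 1) → Finset (Fin n)) (a b : Fin (h + 1)) (j k : Fin n) (i : Fin (h + 1)) : ℝ :=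
  (∑ u ∈ c b, (listIndicator (swapPages n h c a b j u) k i - listIndicator c k i)) / (m b : ℝ)

/-- The expected change of `X_{k,i}` in a step in which page `j` is requested with weight `p j`, a
request hitting list `a` triggers an exchange with a uniformly random page of list `b`, and any
other request does nothing. -/
noncomputable def expectedExchangeChange {n h : ℕ} (p : Fin n → ℝ) (m : Fin (h + 1) → ℕ)
    (c : Fin (h + 1) → Finset (Fin n)) (a b : Fin (h + 1)) (k : Fin n) (i : Fin (h + 1)) : ℝ :=
  ∑ j, p j * if j ∈ c a then meanExchangeChange m c a b j k i else 0

/-- The expected change of `X_{k,i}` in one step of a list-based cache: page `j` is requested with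
weight `p j`; a missed page enters list `entry x` with weight `w x`; a page hit in a list `l` of
`L` is promoted to list `l + 1`; a hit in any other list changes nothing. -/
noncomputable def expectedOneStepChange {n h : ℕ} {ι : Type*} [Fintype ι] (w : ι → ℝ)
    (entry : ι → Fin (h + 1)) (L : Finset (Fin (h + 1))) (p : Fin n → ℝ) (m : Fin (h + 1) → ℕ)
    (c : Fin (h + 1) → Finset (Fin n)) (k : Fin n) (i : Fin (h + 1)) : ℝ :=
  ∑ j, p j * ((if j ∈ c 0 then ∑ x, w x * meanExchangeChange m c 0 (entry x) j k i else 0)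
    + ∑ l ∈ L, if j ∈ c l then meanExchangeChange m c l (l + 1) j k i else 0)

/-- The expected net flow of page `k` from list `a` to list `b` caused by requests hitting list `a`:
`k` moves to `b` when it is requested and back to `a` when it is the page evicted from `b`. -/
noncomputable def expectedPageFlow {n h : ℕ} (p : Fin n → ℝ) (m : Fin (h + 1) → ℕ)
    (c : Fin (h + 1) → Finset (Fin n)) (k : Fin n) (a b : Fin (h + 1)) : ℝ :=
  p k * listIndicator c k a - listPopularity p c a * listIndicator c k b / (m b : ℝ)

lemma ite_mem_insert_erase_sub_ite_mem {β R : Type*} [DecidableEq β] [AddGroupWithOne R]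
    {s : Finset β} {u v : β} (hu : u ∈ s) (hv : v ∉ s) (k : β) :
    ((if k ∈ insert v (s.erase u) then 1 else 0 : R) - if k ∈ s then 1 else 0)
      = (if k = v then 1 else 0) - if k = u then 1 else 0 := by
  have huv : u ≠ v := ne_of_mem_of_not_mem hu hv
  by_cases hkv : k = v
  · subst hkv
    simp [hv, huv.symm]
  · by_cases hku : k = u
    · subst hku
      simp [hu, huv]
    · simp [hkv, hku]

section Exchange

variable {n h : ℕ} {c : Fin (h + 1) → Finset (Fin n)} {a b i : Fin (h + 1)} {j u : Fin n}

lemma swapPages_apply_of_ne_s19 (hia : i ≠ a) (hib : i ≠ b) (j u : Fin n) :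
    swapPages n h c a b j u i = c i := by
  simp [swapPages, hia, hib]

lemma listIndicator_swapPages_source_sub (hab : Disjoint (c a) (c b)) (hj : j ∈ c a) (hu : u ∈ c b)
    (k : Fin n) :
    listIndicator (swapPages n h c a b j u) k a - listIndicator c k a
      = (if k = u then 1 else 0) - if k = j then 1 else 0 := by
  simpa only [listIndicator, swapPages, if_true] using
    ite_mem_insert_erase_sub_ite_mem hj (disjoint_right.mp hab hu) k

lemma listIndicator_swapPages_target_sub (hab : Disjoint (c a) (c b)) (hj : j ∈ c a) (hu : u ∈ c b)
    (k : Fin n) :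
    listIndicator (swapPages n h c a b j u) k b - listIndicator c k b
      = (if k = j then 1 else 0) - if k = u then 1 else 0 := by
  have hjb : j ∉ c b := disjoint_left.mp hab hj
  have hba : b ≠ a := by
    rintro rfl
    exact hjb hj
  simpa only [listIndicator, swapPages, if_neg hba, if_true] using
    ite_mem_insert_erase_sub_ite_mem hu hjb k

variable {m : Fin (h + 1) → ℕ}

lemma meanExchangeChange_of_ne (hia : i ≠ a) (hib : i ≠ b) (j k : Fin n) :
    meanExchangeChange m c a b j k i = 0 := by
  simp [meanExchangeChange, listIndicator, swapPages_apply_of_ne_s19 hia hib]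

lemma meanExchangeChange_target (hab : Disjoint (c a) (c b)) (hcard : #(c b) = m b) (hm : 0 < m b)
    (hj : j ∈ c a) (k : Fin n) :
    meanExchangeChange m c a b j k b
      = (if k = j then 1 else 0) - listIndicator c k b / (m b : ℝ) := by
  have hm' : (m b : ℝ) ≠ 0 := Nat.cast_ne_zero.mpr hm.ne'
  have hsum : ∑ u ∈ c b, (listIndicator (swapPages n h c a b j u) k b - listIndicator c k b)
      = m b * (if k = j then 1 else 0) - listIndicator c k b := by
    rw [sum_congr rfl fun u hu => listIndicator_swapPages_target_sub hab hj hu k,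
      sum_sub_distrib, sum_const, hcard, nsmul_eq_mul, sum_ite_eq, listIndicator]
  rw [meanExchangeChange, hsum, sub_div, mul_div_cancel_left₀ _ hm']

lemma meanExchangeChange_source (hab : Disjoint (c a) (c b)) (hj : j ∈ c a) (k : Fin n) :
    meanExchangeChange m c a b j k a = -meanExchangeChange m c a b j k b := by
  rw [meanExchangeChange, meanExchangeChange, ← neg_div, ← sum_neg_distrib]
  congr 1
  refine sum_congr rfl fun u hu => ?_
  rw [listIndicator_swapPages_source_sub hab hj hu, listIndicator_swapPages_target_sub hab hj hu,
    neg_sub]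

lemma expectedExchangeChange_of_ne (hia : i ≠ a) (hib : i ≠ b) (p : Fin n → ℝ) (k : Fin n) :
    expectedExchangeChange p m c a b k i = 0 := by
  simp [expectedExchangeChange, meanExchangeChange_of_ne hia hib]

lemma expectedExchangeChange_target (hab : Disjoint (c a) (c b)) (hcard : #(c b) = m b)
    (hm : 0 < m b) (p : Fin n → ℝ) (k : Fin n) :
    expectedExchangeChange p m c a b k b = expectedPageFlow p m c k a b := by
  have hterm (j : Fin n) : p j * (if j ∈ c a then meanExchangeChange m c a b j k b else 0)
      = (if k = j then p j * listIndicator c j a else 0)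
        - p j * listIndicator c j a * (listIndicator c k b / (m b : ℝ)) := by
    by_cases hj : j ∈ c a
    · have hja : listIndicator c j a = 1 := if_pos hj
      rw [if_pos hj, meanExchangeChange_target hab hcard hm hj, hja, mul_one, mul_sub, mul_ite,
        mul_one, mul_zero]
    · simp [listIndicator, hj]
  simp only [expectedExchangeChange, hterm, sum_sub_distrib, sum_ite_eq, mem_univ, if_true,
    ← sum_mul, expectedPageFlow, listPopularity, mul_div_assoc]

lemma expectedExchangeChange_source (hab : Disjoint (c a) (c b)) (hcard : #(c b) = m b)
    (hm : 0 < m b) (p : Fin n → ℝ) (k : Fin n) :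
    expectedExchangeChange p m c a b k a = -expectedPageFlow p m c k a b := by
  rw [← expectedExchangeChange_target hab hcard hm, expectedExchangeChange,
    expectedExchangeChange, ← sum_neg_distrib]
  refine sum_congr rfl fun j _ => ?_
  split_ifs with hj
  · rw [meanExchangeChange_source hab hj, mul_neg]
  · simp

end Exchange

lemma expectedOneStepChange_eq_sum_expectedExchangeChange {n h : ℕ} {ι : Type*} [Fintype ι]
    (w : ι → ℝ) (entry : ι → Fin (h + 1)) (L : Finset (Fin (h + 1))) (p : Fin n → ℝ)
    (m : Fin (h + 1) → ℕ) (c : Fin (h + 1) → Finset (Fin n)) (k : Fin n) (i : Fin (h + 1)) :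
    expectedOneStepChange w entry L p m c k i
      = ∑ x, w x * expectedExchangeChange p m c 0 (entry x) k i
        + ∑ l ∈ L, expectedExchangeChange p m c l (l + 1) k i := by
  simp only [expectedOneStepChange, expectedExchangeChange, mul_add, sum_add_distrib, mul_sum]
  rw [sum_comm (s := L), sum_comm (s := univ) (t := univ)]
  congr 1
  refine sum_congr rfl fun j _ => ?_
  split_ifs
  · rw [mul_sum]
    exact sum_congr rfl fun x _ => mul_left_comm _ _ _
  · simp

lemma fin_add_one_eq_of_val_add_one_eq {h : ℕ} {l l' : Fin (h + 1)} (hl : l.val + 1 = l'.val) :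
    l + 1 = l' :=
  Fin.ext ((Fin.val_add_one_of_lt' (by omega)).trans hl)

theorem flat_expected_one_step_change_general {n h : ℕ} {ι : Type*} [Fintype ι]
    (w : ι → ℝ) {entry : ι → Fin (h + 1)} {L : Finset (Fin (h + 1))} (p : Fin n → ℝ)
    {m : Fin (h + 1) → ℕ} (hm : ∀ l, l ≠ 0 → 0 < m l)
    {c : Fin (h + 1) → Finset (Fin n)} (hc : IsCacheConfig n h m c) (k : Fin n)
    {a i b : Fin (h + 1)} (hai : a.val + 1 = i.val) (hib : i.val + 1 = b.val)
    (hentry : ∀ x, i ≠ entry x) (haL : a ∈ L) (hiL : i ∈ L) :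
    expectedOneStepChange w entry L p m c k i
      = p k * listIndicator c k a - listPopularity p c a * listIndicator c k i / (m i : ℝ)
        + listPopularity p c i * listIndicator c k b / (m b : ℝ) - p k * listIndicator c k i := by
  obtain ⟨hcard, hdisj, -⟩ := hc
  obtain ⟨hi0, hb0, hane, hine⟩ : i ≠ 0 ∧ b ≠ 0 ∧ a ≠ i ∧ i ≠ b := by
    simp only [ne_eq, Fin.ext_iff, Fin.val_zero]
    omega
  have hai' : a + 1 = i := fin_add_one_eq_of_val_add_one_eq hai
  have hib' : i + 1 = b := fin_add_one_eq_of_val_add_one_eq hib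
  have hmiss : ∑ x, w x * expectedExchangeChange p m c 0 (entry x) k i = 0 :=
    sum_eq_zero fun x _ => by rw [expectedExchangeChange_of_ne hi0 (hentry x), mul_zero]
  have hhit : ∑ l ∈ L, expectedExchangeChange p m c l (l + 1) k i
      = expectedPageFlow p m c k a i - expectedPageFlow p m c k i b := by
    rw [sum_eq_add_of_mem a i haL hiL hane, hai', hib',
      expectedExchangeChange_target (hdisj a i hane) (hcard i hi0) (hm i hi0),
      expectedExchangeChange_source (hdisj i b hine) (hcard b hb0) (hm b hb0), sub_eq_add_neg]
    rintro l - ⟨hla, hli⟩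
    refine expectedExchangeChange_of_ne hli.symm (fun hil => hla ?_) p k
    exact add_right_cancel (hil.symm.trans hai'.symm)
  rw [expectedOneStepChange_eq_sum_expectedExchangeChange, hmiss, hhit, expectedPageFlow,
    expectedPageFlow]
  ring

/-- for the one-step flat-architecture cache dynamics started from `c`
(a page `j` is requested with probability `p_j`; a missed page enters list `h_N+1` with
probability `α` and list `1` with probability `1−α`, exchanging with a uniformly random
page there; a page hit in list `i ∉ {h_N, h}` exchanges with a uniformly random page of
list `i+1`; hits in lists `h_N` and `h` change nothing), the expected one-step change of
the indicator `X_{k,i}` for a middle list `i ∉ {0,1,h_N,h_N+1,h}` equals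
`p_k X_{k,i−1} − H_{i−1} X_{k,i}/m_i + H_i X_{k,i+1}/m_{i+1} − p_k X_{k,i}`. -/
theorem flat_expected_one_step_change
    (n h hN : ℕ) (hn : 2 ≤ n) (hh : 4 ≤ h) (hN2 : 2 ≤ hN) (hNh : hN + 2 ≤ h)
    (α : ℝ) (hα0 : 0 ≤ α) (hα1 : α ≤ 1)
    (p : Fin n → ℝ) (hp : ∀ k, 0 < p k) (hpsum : ∑ k, p k = 1)
    (m : Fin (h+1) → ℕ) (hm : ∀ i, i ≠ 0 → 0 < m i)
    (hmn : ∑ i ∈ Finset.univ.filter (fun i : Fin (h+1) => i ≠ 0), m i < n)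
    (c : Fin (h+1) → Finset (Fin n)) (hc : c ∈ cacheConfigs n h m)
    (X : (Fin (h+1) → Finset (Fin n)) → Fin n → Fin (h+1) → ℝ)
    (hX : ∀ c' k i, X c' k i = if k ∈ c' i then 1 else 0)
    (k : Fin n) (i : Fin (h+1))
    (hi1 : 1 < i.val) (hih : i.val < h) (hiN : i.val ≠ hN) (hiN1 : i.val ≠ hN + 1) :
    (∑ j, p j *
      ((if j ∈ c 0 then
          α * (∑ u ∈ c ⟨hN + 1, by omega⟩,
              (X (swapPages n h c 0 ⟨hN + 1, by omega⟩ j u) k i - X c k i))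
            / (m ⟨hN + 1, by omega⟩ : ℝ)
          + (1 - α) * (∑ u ∈ c ⟨1, by omega⟩,
              (X (swapPages n h c 0 ⟨1, by omega⟩ j u) k i - X c k i))
            / (m ⟨1, by omega⟩ : ℝ)
        else 0)
        + ∑ l ∈ Finset.univ.filter (fun l : Fin (h+1) => 1 ≤ l.val ∧ l.val < h ∧ l.val ≠ hN),
            (if j ∈ c l then
              (∑ u ∈ c (l + 1), (X (swapPages n h c l (l + 1) j u) k i - X c k i))
                / (m (l + 1) : ℝ)
             else 0)))
    = p k * X c k ⟨i.val - 1, by omega⟩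
      - (∑ j, p j * X c j ⟨i.val - 1, by omega⟩) * X c k i / (m i : ℝ)
      + (∑ j, p j * X c j i) * X c k ⟨i.val + 1, by omega⟩ / (m ⟨i.val + 1, by omega⟩ : ℝ)
      - p k * X c k i := by
  obtain rfl : X = listIndicator := by
    funext c' k i
    exact hX c' k i
  have hconfig : IsCacheConfig n h m c := by simpa [cacheConfigs] using hc
  have hentry : ∀ x, i ≠ (![⟨hN + 1, by omega⟩, ⟨1, by omega⟩] : Fin 2 → Fin (h + 1)) x := by
    simp only [Fin.forall_fin_two, Matrix.cons_val_zero, Matrix.cons_val_one, ne_eq, Fin.ext_iff]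
    omega
  simpa only [expectedOneStepChange, meanExchangeChange, listPopularity, Fin.sum_univ_two,
    Matrix.cons_val_zero, Matrix.cons_val_one, mul_div_assoc] using
    flat_expected_one_step_change_general ![α, 1 - α] p hm hconfig k (by simp; omega) rfl hentry
      (by simp; omega) (by simp; omega)
end
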